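/- Fix Ω₀ > 4/√π, set Ω(ε) = Ω₀/ε, R₀ = √(1 − 4/(√π Ω₀)), and T_ε = {x ∈ B₁ : |x| ≤ R₀ − ε^{1/3}}. There exist constants C = C(Ω₀) > 0, C′ = C′(Ω₀) > 0 and ε₀ > 0 such that for all 0 < ε < ε₀, every GP minimizer Ψ of E^GP_{ε,Ω(ε)}, and every x ∈ T_ε, |Ψ(x)|² ≤ C ε^{1/6} √(|log ε|) · exp(−C′ dist(x, ∂T_ε)² / ε^{2/3}); i.e., the density is exponentially small in the hole. -/

import Mathlib

open MeasureTheory Real Filter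

noncomputable section

/-- Points of the plane. -/
abbrev Pt : Type := EuclideanSpace ℝ (Fin 2)

/-- The open unit disc. -/
def B1 : Set Pt := Metric.ball 0 1

/-- First partial derivative of a complex-valued function. -/
def pd1 (Ψ : Pt → ℂ) (x : Pt) : ℂ := fderiv ℝ Ψ x (EuclideanSpace.single 0 1)

/-- Second partial derivative of a complex-valued function. -/
def pd2 (Ψ : Pt → ℂ) (x : Pt) : ℂ := fderiv ℝ Ψ x (EuclideanSpace.single 1 1)

/-- Angular momentum operator `L = -i (x₁ ∂₂ - x₂ ∂₁)`. -/
def angMom (Ψ : Pt → ℂ) (x : Pt) : ℂ :=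
  -Complex.I * ((x 0 : ℂ) * pd2 Ψ x - (x 1 : ℂ) * pd1 Ψ x)

/-- The Gross-Pitaevskii energy density `|∇Ψ|² - Ω conj(Ψ) LΨ + |Ψ|⁴/ε²`. -/
def gpDensity (ε Ω : ℝ) (Ψ : Pt → ℂ) (x : Pt) : ℝ :=
  ‖pd1 Ψ x‖ ^ 2 + ‖pd2 Ψ x‖ ^ 2
    - Ω * (starRingEnd ℂ (Ψ x) * angMom Ψ x).re
    + ‖Ψ x‖ ^ 4 / ε ^ 2

/-- The Gross-Pitaevskii functional on the unit disc. -/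
def gpEnergy (ε Ω : ℝ) (Ψ : Pt → ℂ) : ℝ := ∫ x in B1, gpDensity ε Ω Ψ x

/-- Admissible (H¹, normalized) wave functions. -/
def gpAdm (Ψ : Pt → ℂ) : Prop :=
  DifferentiableOn ℝ Ψ B1 ∧
  IntegrableOn (fun x => ‖Ψ x‖ ^ 2) B1 ∧
  IntegrableOn (fun x => ‖pd1 Ψ x‖ ^ 2 + ‖pd2 Ψ x‖ ^ 2) B1 ∧
  IntegrableOn (fun x => ‖Ψ x‖ ^ 4) B1 ∧
  IntegrableOn (fun x => (starRingEnd ℂ (Ψ x) * angMom Ψ x).re) B1 ∧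
  (∫ x in B1, ‖Ψ x‖ ^ 2) = 1

/-- The GP ground-state energy: infimum of the functional over normalized functions. -/
def gpGround (ε Ω : ℝ) : ℝ := sInf {E | ∃ Ψ : Pt → ℂ, gpAdm Ψ ∧ E = gpEnergy ε Ω Ψ}

/-- A GP minimizer: a normalized admissible function attaining the infimum. -/
def IsGPMinimizer (ε Ω : ℝ) (Ψ : Pt → ℂ) : Prop :=
  gpAdm Ψ ∧ gpEnergy ε Ω Ψ = gpGround ε Ω

/-- The Thomas-Fermi functional. -/
def tfEnergy (Ω₀ : ℝ) (ρ : Pt → ℝ) : ℝ :=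
  ∫ x in B1, ((ρ x) ^ 2 - Ω₀ ^ 2 * ‖x‖ ^ 2 * ρ x / 4)

/-- Admissible TF densities: nonnegative, in L²(B₁), of total mass one. -/
def tfAdm (ρ : Pt → ℝ) : Prop :=
  IntegrableOn ρ B1 ∧ IntegrableOn (fun x => (ρ x) ^ 2) B1 ∧
  (∀ᵐ x ∂(volume.restrict B1), 0 ≤ ρ x) ∧ (∫ x in B1, ρ x) = 1

/-- The TF ground-state energy. -/
def tfGround (Ω₀ : ℝ) : ℝ := sInf {E | ∃ ρ : Pt → ℝ, tfAdm ρ ∧ E = tfEnergy Ω₀ ρ}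

/-- Radius of the TF "hole". -/
def R0 (Ω₀ : ℝ) : ℝ := Real.sqrt (1 - 4 / (Real.sqrt π * Ω₀))

/-- The TF minimizer. -/
def rhoTF (Ω₀ : ℝ) (x : Pt) : ℝ :=
  if Ω₀ ≤ 4 / Real.sqrt π then 1 / π - Ω₀ ^ 2 / 16 * (1 - 2 * ‖x‖ ^ 2)
  else max 0 (Ω₀ ^ 2 / 8 * (‖x‖ ^ 2 - 1) + Ω₀ / (2 * Real.sqrt π))

/-!
Write `Ω = Ω₀ / ε` and complete the square: up to a constant, `ε²` times the energy is
`∫ ε² |(∇ - i A) Ψ|² + (|Ψ|² - ρ)² + 2 V₋ |Ψ|²`, where `A = Ω x^⊥ / 2`, `V` is the Thomas–Fermi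
potential and `ρ = V₊` is the Thomas–Fermi density. The value of this nonnegative excess at a
minimizer is controlled by a trial function, and it controls the chemical potential.

The trial function is `√ρ`, slightly smoothed, times the soft phase of a function `v` with
`(∇ - i A) v` small where `v` does not vanish: `v` is glued from lowest-Landau-level Gaussians along
parallel strips, and one averages over a free coefficient to keep the zeros of `v` from contributing
much. The resulting excess is `O(ε |log ε|)`, so the chemical potential is `o(ε^{1/3})`.

In the hole, where `V` is negative, the Euler–Lagrange equation then makes `|Ψ|²` subharmonic and,
tested against `|Ψ|²` times a growing exponential weight, exponentially small in `L²`. The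
sub-mean-value inequality turns this into a pointwise bound.
-/

open scoped Gradient RealInnerProductSpace Topology

namespace GrossPitaevskii

section SubMeanValue

lemma hasDerivAt_max_zero_pow (n : ℕ) (t : ℝ) :
    HasDerivAt (fun t : ℝ => max t 0 ^ (n + 2)) ((n + 2) * max t 0 ^ (n + 1)) t := by
  have of_ne : ∀ s : ℝ, s ≠ 0 →
      HasDerivAt (fun t : ℝ => max t 0 ^ (n + 2)) ((n + 2) * max s 0 ^ (n + 1)) s := by
    intro s hs
    rcases hs.lt_or_gt with neg | pos
    · rw [max_eq_right neg.le, zero_pow n.succ_ne_zero, mul_zero]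
      refine (hasDerivAt_const s (0 : ℝ)).congr_of_eventuallyEq ?_
      filter_upwards [gt_mem_nhds neg] with t ht
      simp [max_eq_right ht.le]
    · rw [max_eq_left pos.le]
      have := hasDerivAt_pow (n + 2) s
      push_cast at this
      refine this.congr_of_eventuallyEq ?_
      filter_upwards [lt_mem_nhds pos] with t ht
      rw [max_eq_left ht.le]
  rcases eq_or_ne t 0 with rfl | ht
  · exact hasDerivAt_of_hasDerivAt_of_ne of_ne (by fun_prop) (by fun_prop)
  · exact of_ne t ht

lemma contDiff_max_zero_pow (n : ℕ) : ContDiff ℝ 1 fun t : ℝ => max t 0 ^ (n + 2) := by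
  refine contDiff_one_iff_deriv.2 ⟨fun t => (hasDerivAt_max_zero_pow n t).differentiableAt, ?_⟩
  rw [funext fun t => (hasDerivAt_max_zero_pow n t).deriv]
  fun_prop

lemma hasGradientAt_comp_sub_norm_sq {E : Type*} [NormedAddCommGroup E] [InnerProductSpace ℝ E]
    [CompleteSpace E] {G : ℝ → ℝ} {G' s : ℝ} {c x : E} (hG : HasDerivAt G G' (s - ‖x - c‖ ^ 2)) :
    HasGradientAt (fun y => G (s - ‖y - c‖ ^ 2)) (-(2 * G') • (x - c)) x := by
  have inside : HasFDerivAt (fun y : E => s - ‖y - c‖ ^ 2) (-(2 • innerSL ℝ (x - c))) x :=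
    ((hasFDerivAt_id x).sub_const c).norm_sq.const_sub s
  rw [hasGradientAt_iff_hasFDerivAt]
  refine (hG.comp_hasFDerivAt x inside).congr_fderiv ?_
  ext v
  simp only [map_sub, smul_neg, neg_apply, smul_apply, sub_apply, coe_innerSL_apply, nsmul_eq_mul,
    Nat.cast_ofNat, smul_eq_mul, neg_smul, map_neg, map_smul, InnerProductSpace.toDual_apply_apply,
    neg_inj]
  ring

lemma integrable_mul_of_forall_notMem_eq_zero {X : Type*} [TopologicalSpace X] [T2Space X]
    [MeasurableSpace X] [BorelSpace X] {μ : Measure X} {K : Set X} {w f : X → ℝ}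
    (hK : IsCompact K) (hw : Continuous w) (w_zero : ∀ y ∉ K, w y = 0) (hf : IntegrableOn f K μ) :
    Integrable (fun y => w y * f y) μ := by
  have on_K : IntegrableOn (fun y => w y * f y) K μ := hf.continuousOn_mul hw.continuousOn hK
  refine (integrableOn_iff_integrable_of_support_subset fun y hy => ?_).1 on_K
  by_contra off_K
  simp [w_zero y off_K] at hy

lemma tsupport_subset_of_forall_notMem_eq_zero {X : Type*} [TopologicalSpace X] {K : Set X}
    {f : X → ℝ} (hK : IsClosed K) (f_zero : ∀ y ∉ K, f y = 0) : tsupport f ⊆ K :=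
  closure_minimal (fun y hy => by_contra fun off_K => hy (f_zero y off_K)) hK

lemma fderiv_eq_zero_of_forall_notMem_eq_zero {E : Type*} [NormedAddCommGroup E]
    [NormedSpace ℝ E] {f : E → ℝ} {K : Set E} (hK : IsClosed K) (f_zero : ∀ y ∉ K, f y = 0) :
    ∀ y ∉ K, fderiv ℝ f y = 0 := fun _ hy =>
  fderiv_of_notMem_tsupport ℝ fun h => hy (tsupport_subset_of_forall_notMem_eq_zero hK f_zero h)

variable {ι : Type*} [Fintype ι]

lemma inner_gradient_eq_sum [DecidableEq ι] (f : EuclideanSpace ℝ ι → ℝ)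
    (y w : EuclideanSpace ℝ ι) :
    ⟪∇ f y, w⟫ = ∑ i, fderiv ℝ f y (EuclideanSpace.single i 1) * w i := by
  simp [PiLp.inner_apply, ← inner_gradient_left, mul_comm]

section ByParts

variable {u f : EuclideanSpace ℝ ι → ℝ} {K : Set (EuclideanSpace ℝ ι)}

lemma integrable_mul_fderiv (hK : IsCompact K) (u_int : IntegrableOn u K) (hf : ContDiff ℝ 1 f)
    (f_zero : ∀ y ∉ K, f y = 0) (v : EuclideanSpace ℝ ι) :
    Integrable fun y => u y * fderiv ℝ f y v := by
  simpa only [mul_comm] using integrable_mul_of_forall_notMem_eq_zero hK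
    ((hf.continuous_fderiv one_ne_zero).clm_apply continuous_const)
    (fun y hy => by rw [fderiv_eq_zero_of_forall_notMem_eq_zero hK.isClosed f_zero y hy]; rfl) u_int

lemma integrable_fderiv_mul (hK : IsCompact K) (grad_int : IntegrableOn (∇ u) K)
    (hf : ContDiff ℝ 1 f) (f_zero : ∀ y ∉ K, f y = 0) (v : EuclideanSpace ℝ ι) :
    Integrable fun y => fderiv ℝ u y v * f y := by
  have du_int : IntegrableOn (fun y => fderiv ℝ u y v) K := by
    simp_rw [← inner_gradient_left]
    exact grad_int.inner_const v
  simpa only [mul_comm] using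
    integrable_mul_of_forall_notMem_eq_zero hK hf.continuous f_zero du_int

lemma integral_mul_fderiv_eq_neg (hK : IsCompact K) (hu : ∀ y ∈ K, DifferentiableAt ℝ u y)
    (u_int : IntegrableOn u K) (grad_int : IntegrableOn (∇ u) K) (hf : ContDiff ℝ 1 f)
    (f_zero : ∀ y ∉ K, f y = 0) (v : EuclideanSpace ℝ ι) :
    ∫ y, u y * fderiv ℝ f y v = -∫ y, fderiv ℝ u y v * f y := by
  refine integral_mul_fderiv_eq_neg_fderiv_mul_of_integrable
    (integrable_fderiv_mul hK grad_int hf f_zero v) (integrable_mul_fderiv hK u_int hf f_zero v) ?_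
    (fun y hy => hu y (tsupport_subset_of_forall_notMem_eq_zero hK.isClosed f_zero hy))
    (fun y _ => hf.differentiable one_ne_zero y)
  simpa only [mul_comm] using
    integrable_mul_of_forall_notMem_eq_zero hK hf.continuous f_zero u_int

-- The divergence of `y ↦ f y • (y - x)` is `n f + ⟪∇ f, y - x⟫`.
lemma integral_mul_dilation_eq_neg (hK : IsCompact K) (hu : ∀ y ∈ K, DifferentiableAt ℝ u y)
    (u_int : IntegrableOn u K) (grad_int : IntegrableOn (∇ u) K) (hf : ContDiff ℝ 1 f)
    (f_zero : ∀ y ∉ K, f y = 0) (x : EuclideanSpace ℝ ι) :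
    ∫ y, u y * (Fintype.card ι * f y + ⟪∇ f y, y - x⟫) = -∫ y, f y * ⟪∇ u y, y - x⟫ := by
  classical
  let k (i : ι) (y : EuclideanSpace ℝ ι) : ℝ := f y * (y i - x i)
  have k_zero (i : ι) : ∀ y ∉ K, k i y = 0 := fun y hy => by simp [k, f_zero y hy]
  have hk (i : ι) : ContDiff ℝ 1 (k i) := by
    dsimp only [k]
    fun_prop
  have dk (i : ι) (y : EuclideanSpace ℝ ι) : fderiv ℝ (k i) y (EuclideanSpace.single i 1) =
      f y + fderiv ℝ f y (EuclideanSpace.single i 1) * (y i - x i) := by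
    have coord : HasFDerivAt (fun y : EuclideanSpace ℝ ι => y i - x i)
        (EuclideanSpace.proj i : EuclideanSpace ℝ ι →L[ℝ] ℝ) y :=
      (EuclideanSpace.proj i : EuclideanSpace ℝ ι →L[ℝ] ℝ).hasFDerivAt.sub_const _
    have := (hf.differentiable one_ne_zero y).hasFDerivAt.mul coord
    rw [show k i = f * fun y => y i - x i from rfl, this.fderiv]
    simp only [add_apply, smul_apply, PiLp.proj_apply, PiLp.single_eq_same, smul_eq_mul, mul_one,
      add_right_inj]
    ring
  calc ∫ y, u y * (Fintype.card ι * f y + ⟪∇ f y, y - x⟫)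
      = ∫ y, ∑ i, u y * fderiv ℝ (k i) y (EuclideanSpace.single i 1) := by
        simp only [dk, inner_gradient_eq_sum, ← Finset.mul_sum, Finset.sum_add_distrib,
          Finset.sum_const, Finset.card_univ, nsmul_eq_mul, PiLp.sub_apply]
    _ = ∑ i, -∫ y, fderiv ℝ u y (EuclideanSpace.single i 1) * k i y := by
        rw [integral_finsetSum _ fun i _ => integrable_mul_fderiv hK u_int (hk i) (k_zero i) _]
        exact Finset.sum_congr rfl fun i _ =>
          integral_mul_fderiv_eq_neg hK hu u_int grad_int (hk i) (k_zero i) _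
    _ = -∫ y, f y * ⟪∇ u y, y - x⟫ := by
        rw [Finset.sum_neg_distrib, ← integral_finsetSum _ fun i _ =>
          integrable_fderiv_mul hK grad_int (hk i) (k_zero i) _]
        simp only [inner_gradient_eq_sum, Finset.mul_sum, k, PiLp.sub_apply, mul_left_comm]

end ByParts

/-- The paraboloid `max (r² - ‖y - x‖²) 0` over the ball of radius `r` about `x`, whose powers are
the test functions and kernels behind the sub-mean-value inequality. -/
def cap (r : ℝ) (x y : EuclideanSpace ℝ ι) : ℝ := max (r ^ 2 - ‖y - x‖ ^ 2) 0

lemma cap_nonneg (r : ℝ) (x y : EuclideanSpace ℝ ι) : 0 ≤ cap r x y := le_max_right _ _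

lemma cap_le_sq (r : ℝ) (x y : EuclideanSpace ℝ ι) : cap r x y ≤ r ^ 2 :=
  max_le (by linarith [sq_nonneg ‖y - x‖]) (sq_nonneg r)

lemma continuous_cap (r : ℝ) (x : EuclideanSpace ℝ ι) : Continuous (cap r x) := by
  unfold cap
  fun_prop

lemma cap_eq_zero {r : ℝ} (hr : 0 ≤ r) {x y : EuclideanSpace ℝ ι}
    (hy : y ∉ Metric.closedBall x r) : cap r x y = 0 := by
  rw [mem_closedBall_iff_norm, not_le] at hy
  exact max_eq_right (by nlinarith)

lemma norm_sq_mul_cap (r : ℝ) (x y : EuclideanSpace ℝ ι) :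
    ‖y - x‖ ^ 2 * cap r x y = (r ^ 2 - cap r x y) * cap r x y := by
  unfold cap
  rcases le_total (r ^ 2 - ‖y - x‖ ^ 2) 0 with h | h
  · simp [max_eq_right h]
  · rw [max_eq_left h]
    ring

lemma contDiff_cap_pow (n : ℕ) (r : ℝ) (x : EuclideanSpace ℝ ι) :
    ContDiff ℝ 1 fun y => cap r x y ^ (n + 2) :=
  (contDiff_max_zero_pow n).comp
    (contDiff_const.sub ((contDiff_norm_sq ℝ).comp (contDiff_id.sub contDiff_const)))

lemma gradient_cap_pow (n : ℕ) (r : ℝ) (x y : EuclideanSpace ℝ ι) :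
    ∇ (fun y => cap r x y ^ (n + 2)) y = -(2 * ((n + 2) * cap r x y ^ (n + 1))) • (y - x) :=
  (hasGradientAt_comp_sub_norm_sq (hasDerivAt_max_zero_pow n _)).gradient

lemma hasDerivAt_cap_sq_radius (r : ℝ) (x y : EuclideanSpace ℝ ι) :
    HasDerivAt (fun r => cap r x y ^ 2) (4 * r * cap r x y) r := by
  have inner : HasDerivAt (fun r : ℝ => r ^ 2 - ‖y - x‖ ^ 2) (2 * r) r := by
    simpa using (hasDerivAt_pow 2 r).sub_const (‖y - x‖ ^ 2)
  refine ((hasDerivAt_max_zero_pow 0 _).comp r inner).congr_deriv ?_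
  simp only [cap]
  ring

variable (ι) in
/-- The mass of the kernel `(1 - ‖z‖²)₊²`. -/
def capMass : ℝ := ∫ z : EuclideanSpace ℝ ι, cap 1 0 z ^ 2

variable (ι) in
lemma capMass_pos : 0 < capMass ι := by
  refine Continuous.integral_pos_of_hasCompactSupport_nonneg_nonzero (x := 0)
    ((continuous_cap 1 0).pow 2) ?_ (fun z => sq_nonneg _) (by simp [cap])
  exact HasCompactSupport.intro (isCompact_closedBall 0 1) fun z hz => by
    rw [cap_eq_zero zero_le_one hz, zero_pow two_ne_zero]

lemma integral_cap_sq {r : ℝ} (hr : 0 < r) (x : EuclideanSpace ℝ ι) :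
    ∫ y, cap r x y ^ 2 = r ^ (Fintype.card ι + 4) * capMass ι := by
  have centre : ∫ y, cap r x y ^ 2 = ∫ y : EuclideanSpace ℝ ι, cap r 0 y ^ 2 := by
    rw [← integral_sub_right_eq_self (fun y : EuclideanSpace ℝ ι => cap r 0 y ^ 2) x]
    simp [cap]
  have dilate (z : EuclideanSpace ℝ ι) : cap r 0 (r • z) ^ 2 = r ^ 4 * cap 1 0 z ^ 2 := by
    have : r ^ 2 - ‖r • z‖ ^ 2 = r ^ 2 * (1 - ‖z‖ ^ 2) := by
      rw [norm_smul, Real.norm_of_nonneg hr.le]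
      ring
    rw [cap, cap, sub_zero, sub_zero, this, one_pow,
      show (0 : ℝ) = r ^ 2 * 0 by ring, ← mul_max_of_nonneg _ _ (sq_nonneg r)]
    ring_nf
  have scaled := Measure.integral_comp_smul volume
    (fun y : EuclideanSpace ℝ ι => cap r 0 y ^ 2) r
  simp only [dilate, integral_const_mul, finrank_euclideanSpace, smul_eq_mul] at scaled
  rw [abs_of_pos (by positivity), ← div_eq_inv_mul, eq_div_iff (by positivity)] at scaled
  rw [centre, ← scaled, capMass]
  ring

variable {u : EuclideanSpace ℝ ι → ℝ} {x : EuclideanSpace ℝ ι} {R : ℝ}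

/-- The average of `u` against the normalised kernel `r⁻ⁿ⁻⁴ (r² - ‖y - x‖²)₊²`, up to the
factor `capMass ι`. -/
def capMean (u : EuclideanSpace ℝ ι → ℝ) (x : EuclideanSpace ℝ ι) (r : ℝ) : ℝ :=
  (r ^ (Fintype.card ι + 4))⁻¹ * ∫ y, cap r x y ^ 2 * u y

lemma integrable_cap_sq_mul {r : ℝ} (hr : 0 ≤ r)
    (u_int : IntegrableOn u (Metric.closedBall x r)) :
    Integrable fun y => cap r x y ^ 2 * u y :=
  integrable_mul_of_forall_notMem_eq_zero (isCompact_closedBall x r) ((continuous_cap r x).pow 2)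
    (fun y hy => by rw [cap_eq_zero hr hy, zero_pow two_ne_zero]) u_int

lemma hasDerivAt_integral_cap_sq_mul {r : ℝ} (hr : r ∈ Set.Ioo 0 R)
    (u_int : IntegrableOn u (Metric.closedBall x R)) :
    HasDerivAt (fun r => ∫ y, cap r x y ^ 2 * u y) (∫ y, 4 * r * cap r x y * u y) r := by
  have restrict {f : ℝ → EuclideanSpace ℝ ι → ℝ} {s : ℝ} (hs : s ∈ Set.Ioo 0 R)
      (hf : ∀ y ∉ Metric.closedBall x s, f s y = 0) :
      ∫ y, f s y = ∫ y in Metric.closedBall x R, f s y :=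
    (setIntegral_eq_integral_of_forall_compl_eq_zero fun y hy =>
      hf y fun h => hy (Metric.closedBall_subset_closedBall hs.2.le h)).symm
  have weighted {w : EuclideanSpace ℝ ι → ℝ} (hw : Continuous w) :
      IntegrableOn (fun y => w y * u y) (Metric.closedBall x R) :=
    u_int.continuousOn_mul hw.continuousOn (isCompact_closedBall x R)
  have window : Set.Ioo 0 R ∈ 𝓝 r := Ioo_mem_nhds hr.1 hr.2
  rw [restrict (f := fun r y => 4 * r * cap r x y * u y) hr
    fun y hy => by simp [cap_eq_zero hr.1.le hy]]
  refine HasDerivAt.congr_of_eventuallyEq ?_ <| eventually_of_mem window fun s hs =>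
    restrict (f := fun r y => cap r x y ^ 2 * u y) hs fun y hy => by simp [cap_eq_zero hs.1.le hy]
  refine (hasDerivAt_integral_of_dominated_loc_of_deriv_le
    (F := fun s y => cap s x y ^ 2 * u y) (F' := fun s y => 4 * s * cap s x y * u y)
    (bound := fun y => 4 * R ^ 3 * ‖u y‖) window
    (Eventually.of_forall fun s => (weighted ((continuous_cap s x).pow 2)).aestronglyMeasurable)
    (weighted ((continuous_cap r x).pow 2))
    (weighted (continuous_const.mul (continuous_cap r x))).aestronglyMeasurable
    (Eventually.of_forall fun y s hs => ?_) (u_int.norm.const_mul _)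
    (Eventually.of_forall fun y s _ => (hasDerivAt_cap_sq_radius s x y).mul_const _)).2
  have := cap_nonneg s x y
  have s_pos := hs.1
  rw [norm_mul, Real.norm_of_nonneg (by positivity)]
  refine mul_le_mul_of_nonneg_right ?_ (norm_nonneg _)
  calc 4 * s * cap s x y ≤ 4 * s * s ^ 2 := by gcongr; exact cap_le_sq s x y
    _ = 4 * s ^ 3 := by ring
    _ ≤ 4 * R ^ 3 := by gcongr; exact hs.2.le

/-- Weak subharmonicity of `u` on the closed set `K`: nonnegative `C¹` test functions vanishing off
`K` have nonpositive Dirichlet pairing with `u`. -/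
def WeaklySubharmonicOn (u : EuclideanSpace ℝ ι → ℝ) (K : Set (EuclideanSpace ℝ ι)) : Prop :=
  ∀ g : EuclideanSpace ℝ ι → ℝ, ContDiff ℝ 1 g → (∀ y, 0 ≤ g y) → (∀ y ∉ K, g y = 0) →
    ∫ y, ⟪∇ g y, ∇ u y⟫ ≤ 0

lemma integral_dilation_cap_nonneg {r : ℝ} (hr : r ∈ Set.Ioo 0 R)
    (hu : ∀ y ∈ Metric.closedBall x R, DifferentiableAt ℝ u y)
    (u_int : IntegrableOn u (Metric.closedBall x R))
    (grad_int : IntegrableOn (∇ u) (Metric.closedBall x R))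
    (hsub : WeaklySubharmonicOn u (Metric.closedBall x R)) :
    0 ≤ ∫ y, (4 * r ^ 2 * cap r x y - (Fintype.card ι + 4) * cap r x y ^ 2) * u y := by
  have cap_zero : ∀ y ∉ Metric.closedBall x R, cap r x y = 0 := fun y hy =>
    cap_eq_zero hr.1.le fun h => hy (Metric.closedBall_subset_closedBall hr.2.le h)
  have cubic_grad (y : EuclideanSpace ℝ ι) :
      ⟪∇ (fun y => cap r x y ^ 3) y, ∇ u y⟫ = -6 * (cap r x y ^ 2 * ⟪∇ u y, y - x⟫) := by
    rw [gradient_cap_pow 1, inner_smul_left, real_inner_comm]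
    simp only [Nat.cast_one, Nat.reduceAdd, ringHom_apply, inner_gradient_left, map_sub, neg_mul,
      neg_inj]
    ring
  have cubic : 0 ≤ ∫ y, cap r x y ^ 2 * ⟪∇ u y, y - x⟫ := by
    have := hsub _ (contDiff_cap_pow 1 r x) (fun y => pow_nonneg (cap_nonneg r x y) _)
      (fun y hy => by simp [cap_zero y hy])
    simp only [Nat.reduceAdd, cubic_grad, integral_const_mul] at this
    linarith
  have dilation := integral_mul_dilation_eq_neg (isCompact_closedBall x R) hu u_int grad_int
    (contDiff_cap_pow 0 r x) (fun y hy => by simp [cap_zero y hy]) x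
  have integrand (y : EuclideanSpace ℝ ι) :
      u y * (Fintype.card ι * cap r x y ^ 2 + ⟪∇ (fun y => cap r x y ^ 2) y, y - x⟫)
        = -((4 * r ^ 2 * cap r x y - (Fintype.card ι + 4) * cap r x y ^ 2) * u y) := by
    have moment := norm_sq_mul_cap r x y
    rw [gradient_cap_pow 0, inner_smul_left, real_inner_self_eq_norm_sq]
    simp only [conj_trivial]
    linear_combination -4 * u y * moment
  simp only [zero_add, integrand, integral_neg] at dilation
  linarith

lemma hasDerivAt_capMean {r : ℝ} (hr : r ∈ Set.Ioo 0 R)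
    (u_int : IntegrableOn u (Metric.closedBall x R)) :
    HasDerivAt (capMean u x) ((r ^ (Fintype.card ι + 5))⁻¹ *
      ∫ y, (4 * r ^ 2 * cap r x y - (Fintype.card ι + 4) * cap r x y ^ 2) * u y) r := by
  have sq_int := integrable_cap_sq_mul hr.1.le
    (u_int.mono_set (Metric.closedBall_subset_closedBall hr.2.le))
  have cap_int : Integrable fun y => cap r x y * u y :=
    integrable_mul_of_forall_notMem_eq_zero (isCompact_closedBall x r) (continuous_cap r x)
      (fun y hy => cap_eq_zero hr.1.le hy)
      (u_int.mono_set (Metric.closedBall_subset_closedBall hr.2.le))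
  have r_ne := hr.1.ne'
  have inv := (hasDerivAt_pow (Fintype.card ι + 4) r).inv (pow_ne_zero _ r_ne)
  refine (inv.mul (hasDerivAt_integral_cap_sq_mul hr u_int)).congr_deriv ?_
  simp only [sub_mul, mul_assoc, Pi.inv_apply]
  rw [integral_sub (by simpa only [mul_assoc] using (cap_int.const_mul _).const_mul 4)
    (sq_int.const_mul _)]
  simp only [integral_const_mul]
  push_cast
  field_simp
  ring

lemma monotoneOn_capMean (hu : ∀ y ∈ Metric.closedBall x R, DifferentiableAt ℝ u y)
    (u_int : IntegrableOn u (Metric.closedBall x R))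
    (grad_int : IntegrableOn (∇ u) (Metric.closedBall x R))
    (hsub : WeaklySubharmonicOn u (Metric.closedBall x R)) :
    MonotoneOn (capMean u x) (Set.Ioo 0 R) := by
  refine monotoneOn_of_hasDerivWithinAt_nonneg (convex_Ioo 0 R)
    (fun t ht => (hasDerivAt_capMean ht u_int).continuousAt.continuousWithinAt)
    (fun t ht => (hasDerivAt_capMean (interior_subset ht) u_int).hasDerivWithinAt)
    (fun t ht => ?_)
  have pos := (interior_subset ht).1
  exact mul_nonneg (by positivity)
    (integral_dilation_cap_nonneg (interior_subset ht) hu u_int grad_int hsub)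

lemma capMean_const (c : ℝ) (x : EuclideanSpace ℝ ι) {r : ℝ} (hr : 0 < r) :
    capMean (fun _ => c) x r = capMass ι * c := by
  rw [capMean, integral_mul_const, integral_cap_sq hr]
  field_simp

lemma abs_capMean_sub_le {r : ℝ} (hr : 0 < r) {δ : ℝ}
    (u_int : IntegrableOn u (Metric.closedBall x r))
    (close : ∀ y ∈ Metric.closedBall x r, |u y - u x| ≤ δ) :
    |capMean u x r - capMass ι * u x| ≤ capMass ι * δ := by
  have const_int (c : ℝ) : Integrable fun y => cap r x y ^ 2 * c :=
    integrable_cap_sq_mul hr.le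
      (integrableOn_const (isCompact_closedBall x r).measure_lt_top.ne)
  have u_mean_int := integrable_cap_sq_mul hr.le u_int
  rw [← capMean_const (u x) x hr, ← capMean_const δ x hr, capMean, capMean, capMean, ← mul_sub,
    abs_mul, abs_of_pos (by positivity), ← integral_sub u_mean_int (const_int _)]
  refine mul_le_mul_of_nonneg_left ?_ (by positivity)
  refine (abs_integral_le_integral_abs).trans
    (integral_mono (u_mean_int.sub (const_int _)).abs (const_int _) fun y => ?_)
  by_cases hy : y ∈ Metric.closedBall x r
  · simp only [← mul_sub, abs_mul, abs_pow, sq_abs]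
    exact mul_le_mul_of_nonneg_left (close y hy) (sq_nonneg _)
  · simp [cap_eq_zero hr.le hy]

lemma tendsto_capMean (hR : 0 < R) (hu : ContinuousAt u x)
    (u_int : IntegrableOn u (Metric.closedBall x R)) :
    Tendsto (capMean u x) (𝓝[>] 0) (𝓝 (capMass ι * u x)) := by
  have mass_pos := capMass_pos ι
  refine Metric.tendsto_nhds.2 fun η hη => ?_
  obtain ⟨ρ, ρ_pos, close⟩ := Metric.continuousAt_iff.1 hu (η / (2 * capMass ι)) (by positivity)
  filter_upwards [Ioo_mem_nhdsGT (lt_min ρ_pos hR)] with r hr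
  have hrρ : r < ρ := hr.2.trans_le (min_le_left _ _)
  have hrR : r < R := hr.2.trans_le (min_le_right _ _)
  have bound := abs_capMean_sub_le hr.1
    (u_int.mono_set (Metric.closedBall_subset_closedBall hrR.le))
    fun y hy => (close ((Metric.mem_closedBall.1 hy).trans_lt hrρ)).le
  rw [Real.dist_eq]
  refine bound.trans_lt ?_
  rw [mul_div_assoc', div_lt_iff₀ (by positivity)]
  nlinarith

lemma capMean_le {r : ℝ} (hr : 0 < r) (hrR : r ≤ R)
    (u_nonneg : ∀ y ∈ Metric.closedBall x R, 0 ≤ u y)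
    (u_int : IntegrableOn u (Metric.closedBall x R)) :
    capMean u x r ≤ (r ^ Fintype.card ι)⁻¹ * ∫ y in Metric.closedBall x R, u y := by
  have sub := Metric.closedBall_subset_closedBall (x := x) hrR
  have support : ∫ y, cap r x y ^ 2 * u y = ∫ y in Metric.closedBall x R, cap r x y ^ 2 * u y :=
    (setIntegral_eq_integral_of_forall_compl_eq_zero fun y hy => by
      simp [cap_eq_zero hr.le fun h => hy (sub h)]).symm
  have mass : ∫ y in Metric.closedBall x R, cap r x y ^ 2 * u y
      ≤ r ^ 4 * ∫ y in Metric.closedBall x R, u y := by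
    rw [← integral_const_mul]
    refine setIntegral_mono_on (integrable_cap_sq_mul hr.le (u_int.mono_set sub)).integrableOn
      (u_int.const_mul _) measurableSet_closedBall fun y hy => ?_
    refine mul_le_mul_of_nonneg_right ?_ (u_nonneg y hy)
    calc cap r x y ^ 2 ≤ (r ^ 2) ^ 2 := by gcongr; exacts [cap_nonneg r x y, cap_le_sq r x y]
      _ = r ^ 4 := by ring
  rw [capMean, support]
  calc _ ≤ (r ^ (Fintype.card ι + 4))⁻¹ * (r ^ 4 * ∫ y in Metric.closedBall x R, u y) := by gcongr
    _ = (r ^ Fintype.card ι)⁻¹ * ∫ y in Metric.closedBall x R, u y := by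
      rw [pow_add]
      field_simp

-- The means `capMean u x r` increase with `r`, and tend to `capMass ι * u x` as `r → 0`.
theorem WeaklySubharmonicOn.capMass_mul_le (hR : 0 < R)
    (hsub : WeaklySubharmonicOn u (Metric.closedBall x R))
    (u_nonneg : ∀ y ∈ Metric.closedBall x R, 0 ≤ u y)
    (hu : ∀ y ∈ Metric.closedBall x R, DifferentiableAt ℝ u y)
    (u_int : IntegrableOn u (Metric.closedBall x R))
    (grad_int : IntegrableOn (∇ u) (Metric.closedBall x R)) :
    capMass ι * u x ≤ (R ^ Fintype.card ι)⁻¹ * ∫ y in Metric.closedBall x R, u y := by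
  have below (s : ℝ) (hs : s ∈ Set.Ioo 0 R) : capMass ι * u x ≤ capMean u x s := by
    refine le_of_tendsto (tendsto_capMean hR
      (hu x (Metric.mem_closedBall_self hR.le)).continuousAt u_int) ?_
    filter_upwards [Ioo_mem_nhdsGT hs.1] with r hr
    exact monotoneOn_capMean hu u_int grad_int hsub ⟨hr.1, hr.2.trans hs.2⟩ hs hr.2.le
  have limit : Tendsto (fun s => (s ^ Fintype.card ι)⁻¹ * ∫ y in Metric.closedBall x R, u y)
      (𝓝[<] R) (𝓝 ((R ^ Fintype.card ι)⁻¹ * ∫ y in Metric.closedBall x R, u y)) :=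
    (((continuous_pow _).tendsto R).inv₀ (by positivity)).mul_const _ |>.mono_left inf_le_left
  refine ge_of_tendsto limit ?_
  filter_upwards [Ioo_mem_nhdsLT hR] with s hs
  exact (below s hs).trans (capMean_le hs.1 hs.2.le u_nonneg u_int)

end SubMeanValue

section KineticDensity

lemma measurableSet_B1 : MeasurableSet B1 := Metric.isOpen_ball.measurableSet

lemma norm_lt_one_of_mem_B1 {x : Pt} (hx : x ∈ B1) : ‖x‖ < 1 := mem_ball_zero_iff.1 hx

lemma ae_restrict_B1 {p : Pt → Prop} (h : ∀ x ∈ B1, p x) : ∀ᵐ x ∂volume.restrict B1, p x :=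
  (ae_restrict_iff' measurableSet_B1).2 (Eventually.of_forall h)

lemma volume_B1 : volume B1 = ENNReal.ofReal π := by
  rw [B1, EuclideanSpace.volume_ball_fin_two]
  simp

instance isFiniteMeasure_restrict_B1 : IsFiniteMeasure (volume.restrict B1) :=
  ⟨by simp [volume_B1]⟩

lemma setIntegral_const_B1 (c : ℝ) : ∫ _ in B1, c = π * c := by
  rw [setIntegral_const, Measure.real, volume_B1, ENNReal.toReal_ofReal pi_pos.le, smul_eq_mul]

lemma integrableOn_mul_of_continuous {w f : Pt → ℝ} (hw : Continuous w) (hf : IntegrableOn f B1) :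
    IntegrableOn (fun x => w x * f x) B1 := by
  obtain ⟨C, hC⟩ := (isCompact_closedBall (0 : Pt) 1).exists_bound_of_continuousOn hw.continuousOn
  exact Integrable.bdd_mul hf hw.aestronglyMeasurable
    (ae_restrict_B1 fun x hx => hC x (Metric.ball_subset_closedBall hx))

lemma integrableOn_of_continuous {w : Pt → ℝ} (hw : Continuous w) : IntegrableOn w B1 := by
  simpa using integrableOn_mul_of_continuous hw (integrableOn_const (C := (1 : ℝ)) (by
    simp [volume_B1]))

variable {ψ : Pt → ℂ} {g : Pt → ℝ} {x : Pt}

/-- The matter density `|ψ|²`. -/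
def density (ψ : Pt → ℂ) (x : Pt) : ℝ := ‖ψ x‖ ^ 2

lemma density_nonneg (ψ : Pt → ℂ) (x : Pt) : 0 ≤ density ψ x := sq_nonneg _

lemma density_smul (g : Pt → ℝ) (ψ : Pt → ℂ) (x : Pt) :
    density (fun y => g y • ψ y) x = g x ^ 2 * density ψ x := by
  rw [density, norm_smul, mul_pow, Real.norm_eq_abs, sq_abs, density]

/-- The magnetic derivative `(∇ - iA) ψ` at `x` along `v`, with `A(x) = Ω/2 (-x₂, x₁)`. -/
def covDeriv (Ω : ℝ) (ψ : Pt → ℂ) (x v : Pt) : ℂ :=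
  fderiv ℝ ψ x v - (Ω / 2 * (x 0 * v 1 - x 1 * v 0)) • (Complex.I * ψ x)

/-- The magnetic kinetic energy density `|(∇ - iA) ψ|²`; `kin 0 ψ` is `|∇ψ|²`. -/
def kin (Ω : ℝ) (ψ : Pt → ℂ) (x : Pt) : ℝ :=
  ∑ i, ‖covDeriv Ω ψ x (EuclideanSpace.single i 1)‖ ^ 2

lemma kin_nonneg (Ω : ℝ) (ψ : Pt → ℂ) (x : Pt) : 0 ≤ kin Ω ψ x :=
  Finset.sum_nonneg fun _ _ => sq_nonneg _

lemma norm_add_sq_le_two_mul {E : Type*} [SeminormedAddCommGroup E] (a b : E) :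
    ‖a + b‖ ^ 2 ≤ 2 * ‖a‖ ^ 2 + 2 * ‖b‖ ^ 2 := by
  nlinarith [norm_add_le a b, norm_nonneg (a + b), sq_nonneg (‖a‖ - ‖b‖)]

lemma covDeriv_eq_add (Ω Ω' : ℝ) (ψ : Pt → ℂ) (x v : Pt) :
    covDeriv Ω ψ x v = covDeriv Ω' ψ x v +
      ((Ω' - Ω) / 2 * (x 0 * v 1 - x 1 * v 0)) • (Complex.I * ψ x) := by
  unfold covDeriv
  module

lemma kin_le_two_mul_kin_add (Ω Ω' : ℝ) (ψ : Pt → ℂ) (x : Pt) :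
    kin Ω ψ x ≤ 2 * kin Ω' ψ x + (Ω' - Ω) ^ 2 / 2 * ‖x‖ ^ 2 * density ψ x := by
  have term (v : Pt) : ‖covDeriv Ω ψ x v‖ ^ 2 ≤ 2 * ‖covDeriv Ω' ψ x v‖ ^ 2 +
      (Ω' - Ω) ^ 2 / 2 * (x 0 * v 1 - x 1 * v 0) ^ 2 * density ψ x := by
    rw [covDeriv_eq_add Ω Ω']
    refine (norm_add_sq_le_two_mul _ _).trans_eq ?_
    rw [norm_smul, norm_mul Complex.I, Complex.norm_I, one_mul, mul_pow, Real.norm_eq_abs, sq_abs,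
      density]
    ring
  refine (Finset.sum_le_sum fun i _ => term (EuclideanSpace.single i 1)).trans_eq ?_
  simp only [kin, Fin.sum_univ_two, EuclideanSpace.norm_sq_eq, Real.norm_eq_abs, sq_abs,
    PiLp.single_apply]
  simp only [one_ne_zero, ↓reduceIte, mul_zero, mul_one, zero_sub, even_two, Even.neg_pow,
    zero_ne_one, sub_zero]
  ring

lemma kin_eq (Ω : ℝ) (ψ : Pt → ℂ) (x : Pt) :
    kin Ω ψ x = ‖pd1 ψ x‖ ^ 2 + ‖pd2 ψ x‖ ^ 2 - Ω * (starRingEnd ℂ (ψ x) * angMom ψ x).re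
      + Ω ^ 2 / 4 * ‖x‖ ^ 2 * density ψ x := by
  simp only [kin, covDeriv, angMom, pd1, pd2, density, Fin.sum_univ_two, EuclideanSpace.norm_sq_eq,
    ← Complex.normSq_eq_norm_sq, Complex.normSq_apply, Real.norm_eq_abs, sq_abs]
  simp only [ne_eq, one_ne_zero, not_false_eq_true, PiLp.single_eq_of_ne, mul_zero,
    PiLp.single_eq_same, mul_one, zero_sub, mul_neg, neg_smul, Complex.real_smul,
    Complex.ofReal_mul, Complex.ofReal_div, Complex.ofReal_ofNat, sub_neg_eq_add, Complex.add_re,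
    Complex.mul_re, Complex.div_ofNat_re, Complex.ofReal_re, Complex.div_ofNat_im,
    Complex.ofReal_im, zero_div, sub_zero, Complex.I_re, zero_mul, Complex.I_im, one_mul,
    Complex.mul_im, add_zero, zero_add, Complex.add_im, neg_zero, zero_ne_one, Complex.sub_re,
    Complex.sub_im, neg_mul, Complex.neg_re, Complex.conj_re, neg_sub, Complex.conj_im, neg_add_rev]
  ring

lemma hasFDerivAt_density (hψ : DifferentiableAt ℝ ψ x) :
    HasFDerivAt (density ψ) (2 • (innerSL ℝ (ψ x)).comp (fderiv ℝ ψ x)) x :=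
  hψ.hasFDerivAt.norm_sq

-- The gauge term drops out because `i ψ` is orthogonal to `ψ`.
lemma fderiv_density (Ω : ℝ) (hψ : DifferentiableAt ℝ ψ x) (v : Pt) :
    fderiv ℝ (density ψ) x v = 2 * ⟪covDeriv Ω ψ x v, ψ x⟫ := by
  have gauge : ⟪Complex.I * ψ x, ψ x⟫ = 0 := by
    simp only [Complex.inner, map_mul, Complex.conj_I, neg_mul, mul_neg, Complex.neg_re,
      Complex.mul_re, Complex.I_re, Complex.conj_re, zero_mul, Complex.I_im, Complex.conj_im,
      one_mul, sub_neg_eq_add, zero_add, Complex.mul_im, neg_zero, neg_sub]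
    ring
  rw [(hasFDerivAt_density hψ).fderiv, covDeriv, inner_sub_left, inner_smul_left, gauge,
    real_inner_comm]
  simp [-Complex.inner]

lemma gradient_apply (f : Pt → ℝ) (x : Pt) (i : Fin 2) :
    (∇ f x) i = fderiv ℝ f x (EuclideanSpace.single i 1) := by
  rw [← inner_gradient_left, EuclideanSpace.inner_single_right, one_mul, conj_trivial]

lemma norm_gradient_density_sq_le (Ω : ℝ) (hψ : DifferentiableAt ℝ ψ x) :
    ‖∇ (density ψ) x‖ ^ 2 ≤ 4 * (density ψ x * kin Ω ψ x) := by
  rw [EuclideanSpace.norm_sq_eq, kin, Finset.mul_sum, Finset.mul_sum]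
  refine Finset.sum_le_sum fun i _ => ?_
  have cauchy := real_inner_mul_inner_self_le
    (covDeriv Ω ψ x (EuclideanSpace.single i 1)) (ψ x)
  simp only [real_inner_self_eq_norm_sq] at cauchy
  rw [gradient_apply, fderiv_density Ω hψ, Real.norm_eq_abs, sq_abs, density]
  linarith

lemma covDeriv_smul (Ω : ℝ) (hψ : DifferentiableAt ℝ ψ x) (hg : DifferentiableAt ℝ g x) (v : Pt) :
    covDeriv Ω (fun y => g y • ψ y) x v = g x • covDeriv Ω ψ x v + fderiv ℝ g x v • ψ x := by
  simp only [covDeriv, (hg.hasFDerivAt.fun_smul hψ.hasFDerivAt).fderiv]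
  simp only [add_apply, smul_apply, Complex.real_smul, ContinuousLinearMap.smulRight_apply,
    Complex.ofReal_mul, Complex.ofReal_div, Complex.ofReal_ofNat, Complex.ofReal_sub]
  ring

lemma kin_smul (Ω : ℝ) (hψ : DifferentiableAt ℝ ψ x) (hg : DifferentiableAt ℝ g x) :
    kin Ω (fun y => g y • ψ y) x = g x ^ 2 * kin Ω ψ x + g x * ⟪∇ g x, ∇ (density ψ) x⟫
      + ‖∇ g x‖ ^ 2 * density ψ x := by
  simp only [kin, covDeriv_smul Ω hψ hg, norm_add_sq_real, norm_smul, inner_smul_left,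
    inner_smul_right, inner_gradient_eq_sum, gradient_apply, fderiv_density Ω hψ,
    EuclideanSpace.norm_sq_eq (∇ g x), Fin.sum_univ_two, mul_pow, Real.norm_eq_abs, sq_abs, density,
    conj_trivial]
  ring

end KineticDensity

section FiniteEnergy

variable {ψ : Pt → ℂ} {g : Pt → ℝ}

/-- Wave functions on the unit disc with finite Gross–Pitaevskii energy: `gpAdm` without the
normalization. -/
structure FiniteEnergy (ψ : Pt → ℂ) : Prop where
  differentiableOn : DifferentiableOn ℝ ψ B1
  integrableOn_density : IntegrableOn (density ψ) B1
  integrableOn_density_sq : IntegrableOn (fun x => density ψ x ^ 2) B1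
  integrableOn_kin_zero : IntegrableOn (kin 0 ψ) B1

/-- The squared `L²` norm on the unit disc. -/
def mass (ψ : Pt → ℂ) : ℝ := ∫ x in B1, density ψ x

lemma kin_zero_eq (ψ : Pt → ℂ) (x : Pt) : kin 0 ψ x = ‖pd1 ψ x‖ ^ 2 + ‖pd2 ψ x‖ ^ 2 := by
  simp [kin_eq]

lemma measurable_gradient (f : Pt → ℝ) : Measurable (∇ f) :=
  (InnerProductSpace.toDual ℝ Pt).symm.continuous.measurable.comp (measurable_fderiv ℝ f)

namespace FiniteEnergy

lemma differentiableAt (hψ : FiniteEnergy ψ) {x : Pt} (hx : x ∈ B1) : DifferentiableAt ℝ ψ x :=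
  hψ.differentiableOn.differentiableAt (Metric.isOpen_ball.mem_nhds hx)

lemma aestronglyMeasurable (hψ : FiniteEnergy ψ) :
    AEStronglyMeasurable ψ (volume.restrict B1) :=
  hψ.differentiableOn.continuousOn.aestronglyMeasurable measurableSet_B1

lemma integrableOn_kin (hψ : FiniteEnergy ψ) (Ω : ℝ) : IntegrableOn (kin Ω ψ) B1 := by
  have covDeriv_meas (v : Pt) : AEStronglyMeasurable (fun x => covDeriv Ω ψ x v)
      (volume.restrict B1) := by
    have coeff_cont : Continuous fun x : Pt => Ω / 2 * (x 0 * v 1 - x 1 * v 0) := by fun_prop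
    exact (measurable_fderiv_apply_const ℝ ψ v).aestronglyMeasurable.sub
      (coeff_cont.aestronglyMeasurable.fun_smul (hψ.aestronglyMeasurable.const_mul Complex.I))
  refine Integrable.mono' ((hψ.integrableOn_kin_zero.const_mul 2).add
    (hψ.integrableOn_density.const_mul (Ω ^ 2 / 2)))
    (Finset.aestronglyMeasurable_fun_sum _ fun i _ => (covDeriv_meas _).norm.pow 2) ?_
  refine ae_restrict_B1 fun x hx => ?_
  rw [Real.norm_of_nonneg (kin_nonneg Ω ψ x)]
  have gauge := kin_le_two_mul_kin_add Ω 0 ψ x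
  have inside : ‖x‖ ^ 2 ≤ 1 := by
    have := norm_lt_one_of_mem_B1 hx
    nlinarith [norm_nonneg x]
  have := mul_le_mul_of_nonneg_right inside
    (mul_nonneg (by positivity : 0 ≤ Ω ^ 2 / 2) (density_nonneg ψ x))
  simp only [Pi.add_apply]
  linarith

lemma integrableOn_gradient_density (hψ : FiniteEnergy ψ) :
    IntegrableOn (∇ (density ψ)) B1 := by
  refine Integrable.mono' (hψ.integrableOn_density.add hψ.integrableOn_kin_zero)
    (measurable_gradient _).aestronglyMeasurable (ae_restrict_B1 fun x hx => ?_)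
  have := norm_gradient_density_sq_le 0 (hψ.differentiableAt hx)
  exact abs_le_of_sq_le_sq' (b := density ψ x + kin 0 ψ x)
    (by linarith [sq_nonneg (density ψ x - kin 0 ψ x)])
    (add_nonneg (density_nonneg ψ x) (kin_nonneg 0 ψ x)) |>.2

lemma integrableOn_inner_gradient_density (hψ : FiniteEnergy ψ) {F : Pt → Pt}
    (hF : Continuous F) : IntegrableOn (fun x => ⟪F x, ∇ (density ψ) x⟫) B1 := by
  obtain ⟨C, hC⟩ := (isCompact_closedBall (0 : Pt) 1).exists_bound_of_continuousOn hF.continuousOn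
  refine Integrable.mono' (hψ.integrableOn_gradient_density.norm.const_mul C)
    (hF.measurable.inner (measurable_gradient _)).aestronglyMeasurable
    (ae_restrict_B1 fun x hx => (norm_inner_le_norm _ _).trans ?_)
  exact mul_le_mul_of_nonneg_right (hC x (Metric.ball_subset_closedBall hx)) (norm_nonneg _)

end FiniteEnergy

lemma continuous_gradient (hg : ContDiff ℝ 1 g) : Continuous (∇ g) :=
  (InnerProductSpace.toDual ℝ Pt).symm.continuous.comp (hg.continuous_fderiv one_ne_zero)

lemma FiniteEnergy.smul (hψ : FiniteEnergy ψ) (hg : ContDiff ℝ 1 g) :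
    FiniteEnergy fun x => g x • ψ x where
  differentiableOn := (hg.differentiable one_ne_zero).differentiableOn.smul hψ.differentiableOn
  integrableOn_density := by
    rw [funext (density_smul g ψ)]
    exact integrableOn_mul_of_continuous (hg.continuous.pow 2) hψ.integrableOn_density
  integrableOn_density_sq := by
    simp only [density_smul, mul_pow]
    exact integrableOn_mul_of_continuous ((hg.continuous.pow 2).pow 2) hψ.integrableOn_density_sq
  integrableOn_kin_zero := by
    have grad_cont := continuous_gradient hg
    refine IntegrableOn.congr_fun (((integrableOn_mul_of_continuous (hg.continuous.pow 2)
      hψ.integrableOn_kin_zero).add (hψ.integrableOn_inner_gradient_density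
      (hg.continuous.smul grad_cont))).add (integrableOn_mul_of_continuous (grad_cont.norm.pow 2)
      hψ.integrableOn_density)) (fun x hx => ?_) measurableSet_B1
    simp only [Pi.add_apply]
    rw [kin_smul 0 (hψ.differentiableAt hx) (hg.differentiable one_ne_zero x)]
    simp

lemma FiniteEnergy.of_contDiff (hψ : ContDiff ℝ 1 ψ) : FiniteEnergy ψ := by
  have density_cont : Continuous (density ψ) := hψ.continuous.norm.pow 2
  refine ⟨(hψ.differentiable one_ne_zero).differentiableOn,
    integrableOn_of_continuous density_cont, integrableOn_of_continuous (density_cont.pow 2),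
    integrableOn_of_continuous ?_⟩
  simp only [funext (kin_zero_eq ψ), pd1, pd2]
  have := hψ.continuous_fderiv one_ne_zero
  fun_prop

lemma FiniteEnergy.integrableOn_angMom (hψ : FiniteEnergy ψ) :
    IntegrableOn (fun x => (starRingEnd ℂ (ψ x) * angMom ψ x).re) B1 := by
  have expand (x : Pt) : (starRingEnd ℂ (ψ x) * angMom ψ x).re =
      kin 0 ψ x + 1 / 4 * ‖x‖ ^ 2 * density ψ x - kin 1 ψ x := by
    rw [kin_eq 1, kin_zero_eq]
    ring
  simp only [expand]
  exact (hψ.integrableOn_kin_zero.add (integrableOn_mul_of_continuous (by fun_prop)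
    hψ.integrableOn_density)).sub (hψ.integrableOn_kin 1)

lemma gpAdm_iff : gpAdm ψ ↔ FiniteEnergy ψ ∧ mass ψ = 1 := by
  have quartic : (fun x => density ψ x ^ 2) = fun x => ‖ψ x‖ ^ 4 := by
    funext x
    rw [density]
    ring
  constructor
  · rintro ⟨diff, sq_int, grad_int, quartic_int, -, normalized⟩
    exact ⟨⟨diff, sq_int, quartic ▸ quartic_int, funext (kin_zero_eq ψ) ▸ grad_int⟩, normalized⟩
  · rintro ⟨hψ, normalized⟩
    exact ⟨hψ.differentiableOn, hψ.integrableOn_density,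
      funext (kin_zero_eq ψ) ▸ hψ.integrableOn_kin_zero, quartic ▸ hψ.integrableOn_density_sq,
      hψ.integrableOn_angMom, normalized⟩

end FiniteEnergy

section ReducedEnergy

variable {ε Ω₀ : ℝ} {ψ Ψ : Pt → ℂ}

lemma pos_of_four_div_sqrt_pi_lt (h : 4 / √π < Ω₀) : 0 < Ω₀ := lt_trans (by positivity) h

lemma R0_sq (h : 4 / √π < Ω₀) : R0 Ω₀ ^ 2 = 1 - 4 / (√π * Ω₀) := by
  have Ω₀_pos := pos_of_four_div_sqrt_pi_lt h
  rw [R0, Real.sq_sqrt]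
  rw [div_lt_iff₀ (by positivity)] at h
  rw [sub_nonneg, div_le_one (by positivity)]
  linarith

lemma R0_pos (h : 4 / √π < Ω₀) : 0 < R0 Ω₀ := by
  have Ω₀_pos := pos_of_four_div_sqrt_pi_lt h
  rw [div_lt_iff₀ (by positivity)] at h
  rw [R0, Real.sqrt_pos, sub_pos, div_lt_one (by positivity)]
  linarith

lemma R0_lt_one (h : 4 / √π < Ω₀) : R0 Ω₀ < 1 := by
  have Ω₀_pos := pos_of_four_div_sqrt_pi_lt h
  rw [R0, Real.sqrt_lt' one_pos, one_pow, sub_lt_self_iff]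
  positivity

/-- The Thomas–Fermi potential, whose positive part is the density `rhoTF` when there is a hole. -/
def tfPotential (Ω₀ : ℝ) (x : Pt) : ℝ := Ω₀ ^ 2 / 8 * (‖x‖ ^ 2 - R0 Ω₀ ^ 2)

lemma continuous_tfPotential (Ω₀ : ℝ) : Continuous (tfPotential Ω₀) := by
  unfold tfPotential
  fun_prop

lemma tfPotential_le {x : Pt} (hx : x ∈ B1) : tfPotential Ω₀ x ≤ Ω₀ ^ 2 / 8 := by
  have := norm_lt_one_of_mem_B1 hx
  exact mul_le_of_le_one_right (by positivity)
    (by nlinarith [norm_nonneg x, sq_nonneg (R0 Ω₀)])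

/-- The part of the reduced energy that is quadratic in the wave function. -/
def quadEnergy (ε Ω₀ : ℝ) (ψ : Pt → ℂ) : ℝ :=
  ∫ x in B1, (ε ^ 2 * kin (Ω₀ / ε) ψ x - 2 * (tfPotential Ω₀ x * density ψ x))

/-- The part of the reduced energy that is quartic in the wave function. -/
def quarticEnergy (ψ : Pt → ℂ) : ℝ := ∫ x in B1, density ψ x ^ 2

/-- `ε²` times the Gross–Pitaevskii energy at `Ω = Ω₀ / ε`, up to a multiple of the mass. -/
def reducedEnergy (ε Ω₀ : ℝ) (ψ : Pt → ℂ) : ℝ := quadEnergy ε Ω₀ ψ + quarticEnergy ψ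

lemma FiniteEnergy.integrableOn_tfPotential_mul (hψ : FiniteEnergy ψ) (Ω₀ : ℝ) :
    IntegrableOn (fun x => tfPotential Ω₀ x * density ψ x) B1 :=
  integrableOn_mul_of_continuous (continuous_tfPotential Ω₀) hψ.integrableOn_density

lemma FiniteEnergy.integrableOn_quadEnergy (hψ : FiniteEnergy ψ) (ε Ω₀ : ℝ) : IntegrableOn
    (fun x => ε ^ 2 * kin (Ω₀ / ε) ψ x - 2 * (tfPotential Ω₀ x * density ψ x)) B1 :=
  ((hψ.integrableOn_kin _).const_mul _).sub ((hψ.integrableOn_tfPotential_mul Ω₀).const_mul 2)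

lemma FiniteEnergy.sq_mul_gpEnergy (hψ : FiniteEnergy ψ) (hε : ε ≠ 0) (Ω₀ : ℝ) :
    ε ^ 2 * gpEnergy ε (Ω₀ / ε) ψ =
      reducedEnergy ε Ω₀ ψ - Ω₀ ^ 2 * R0 Ω₀ ^ 2 / 4 * mass ψ := by
  have quad_int := hψ.integrableOn_quadEnergy ε Ω₀
  have sum_int : IntegrableOn (fun x => ε ^ 2 * kin (Ω₀ / ε) ψ x -
      2 * (tfPotential Ω₀ x * density ψ x) + density ψ x ^ 2) B1 :=
    quad_int.add hψ.integrableOn_density_sq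
  rw [gpEnergy, reducedEnergy, quadEnergy, quarticEnergy, mass, ← integral_const_mul,
    ← integral_const_mul, ← integral_add quad_int hψ.integrableOn_density_sq,
    ← integral_sub sum_int (hψ.integrableOn_density.const_mul _)]
  congr 1 with x
  simp only [gpDensity, kin_eq (Ω₀ / ε), density, tfPotential]
  field_simp
  ring

lemma FiniteEnergy.neg_mul_mass_le_reducedEnergy (hψ : FiniteEnergy ψ) (ε Ω₀ : ℝ) :
    -(Ω₀ ^ 2 / 4) * mass ψ ≤ reducedEnergy ε Ω₀ ψ := by
  rw [mass, reducedEnergy, quadEnergy, quarticEnergy, ← integral_const_mul,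
    ← integral_add (hψ.integrableOn_quadEnergy ε Ω₀) hψ.integrableOn_density_sq]
  refine setIntegral_mono_on (hψ.integrableOn_density.const_mul _)
    ((hψ.integrableOn_quadEnergy ε Ω₀).add hψ.integrableOn_density_sq) measurableSet_B1
    fun x hx => ?_
  have kin_part := mul_nonneg (sq_nonneg ε) (kin_nonneg (Ω₀ / ε) ψ x)
  have potential_part := mul_le_mul_of_nonneg_right (tfPotential_le (Ω₀ := Ω₀) hx)
    (density_nonneg ψ x)
  nlinarith [sq_nonneg (density ψ x)]

lemma finiteEnergy_of_isGPMinimizer {Ω : ℝ} (hΨ : IsGPMinimizer ε Ω Ψ) : FiniteEnergy Ψ :=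
  (gpAdm_iff.1 hΨ.1).1

lemma mass_eq_one_of_isGPMinimizer {Ω : ℝ} (hΨ : IsGPMinimizer ε Ω Ψ) : mass Ψ = 1 :=
  (gpAdm_iff.1 hΨ.1).2

lemma reducedEnergy_le_of_isGPMinimizer (hΨ : IsGPMinimizer ε (Ω₀ / ε) Ψ) (hε : 0 < ε)
    (hψ : FiniteEnergy ψ) (normalized : mass ψ = 1) :
    reducedEnergy ε Ω₀ Ψ ≤ reducedEnergy ε Ω₀ ψ := by
  have energy (φ : Pt → ℂ) (hφ : gpAdm φ) : gpEnergy ε (Ω₀ / ε) φ =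
      (reducedEnergy ε Ω₀ φ - Ω₀ ^ 2 * R0 Ω₀ ^ 2 / 4) / ε ^ 2 := by
    obtain ⟨fin, unit⟩ := gpAdm_iff.1 hφ
    rw [eq_div_iff (by positivity), mul_comm, fin.sq_mul_gpEnergy hε.ne', unit, mul_one]
  have ground_le : gpEnergy ε (Ω₀ / ε) Ψ ≤ gpEnergy ε (Ω₀ / ε) ψ := by
    rw [hΨ.2]
    refine csInf_le ⟨(-(Ω₀ ^ 2 / 4) - Ω₀ ^ 2 * R0 Ω₀ ^ 2 / 4) / ε ^ 2, ?_⟩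
      ⟨ψ, gpAdm_iff.2 ⟨hψ, normalized⟩, rfl⟩
    rintro E ⟨φ, hφ, rfl⟩
    obtain ⟨fin, unit⟩ := gpAdm_iff.1 hφ
    have lower := fin.neg_mul_mass_le_reducedEnergy ε Ω₀
    rw [unit, mul_one] at lower
    rw [energy φ hφ]
    gcongr
  rw [energy Ψ hΨ.1, energy ψ (gpAdm_iff.2 ⟨hψ, normalized⟩),
    div_le_div_iff_of_pos_right (by positivity)] at ground_le
  linarith

lemma kin_const_smul (Ω c : ℝ) {x : Pt} (hψ : DifferentiableAt ℝ ψ x) :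
    kin Ω (fun y => c • ψ y) x = c ^ 2 * kin Ω ψ x := by
  simpa [gradient_const] using kin_smul Ω hψ (differentiableAt_const c)

lemma mass_const_smul (c : ℝ) (ψ : Pt → ℂ) : mass (fun x => c • ψ x) = c ^ 2 * mass ψ := by
  simp only [mass, density_smul fun _ => c, integral_const_mul]

lemma quarticEnergy_const_smul (c : ℝ) (ψ : Pt → ℂ) :
    quarticEnergy (fun x => c • ψ x) = c ^ 4 * quarticEnergy ψ := by
  simp only [quarticEnergy, density_smul fun _ => c, mul_pow, integral_const_mul]
  ring

lemma FiniteEnergy.quadEnergy_const_smul (hψ : FiniteEnergy ψ) (ε Ω₀ c : ℝ) :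
    quadEnergy ε Ω₀ (fun x => c • ψ x) = c ^ 2 * quadEnergy ε Ω₀ ψ := by
  rw [quadEnergy, quadEnergy, ← integral_const_mul]
  refine setIntegral_congr_fun measurableSet_B1 fun x hx => ?_
  simp only [kin_const_smul _ c (hψ.differentiableAt hx), density_smul fun _ => c]
  ring

lemma mass_inv_sqrt_smul (mass_pos : 0 < mass ψ) : mass (fun x => (√(mass ψ))⁻¹ • ψ x) = 1 := by
  rw [mass_const_smul, inv_pow, Real.sq_sqrt mass_pos.le, inv_mul_cancel₀ mass_pos.ne']

lemma reducedEnergy_mul_mass_sq_le (hΨ : IsGPMinimizer ε (Ω₀ / ε) Ψ) (hε : 0 < ε)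
    (hψ : FiniteEnergy ψ) (mass_pos : 0 < mass ψ) :
    reducedEnergy ε Ω₀ Ψ * mass ψ ^ 2 ≤ quadEnergy ε Ω₀ ψ * mass ψ + quarticEnergy ψ := by
  have minimal := reducedEnergy_le_of_isGPMinimizer hΨ hε
    (hψ.smul (g := fun _ => (√(mass ψ))⁻¹) contDiff_const) (mass_inv_sqrt_smul mass_pos)
  have four : (√(mass ψ))⁻¹ ^ 4 = (mass ψ ^ 2)⁻¹ := by
    rw [inv_pow, show √(mass ψ) ^ 4 = (√(mass ψ) ^ 2) ^ 2 by ring, Real.sq_sqrt mass_pos.le]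
  rw [reducedEnergy.eq_def _ _ fun x => (√(mass ψ))⁻¹ • ψ x, hψ.quadEnergy_const_smul,
    quarticEnergy_const_smul, four, inv_pow, Real.sq_sqrt mass_pos.le] at minimal
  calc _ ≤ ((mass ψ)⁻¹ * quadEnergy ε Ω₀ ψ + (mass ψ ^ 2)⁻¹ * quarticEnergy ψ) * mass ψ ^ 2 := by
        gcongr
    _ = quadEnergy ε Ω₀ ψ * mass ψ + quarticEnergy ψ := by field_simp

end ReducedEnergy

section EulerLagrange

variable {ε Ω₀ β : ℝ} {ψ Ψ : Pt → ℂ} {g : Pt → ℝ}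

lemma hasDerivAt_setIntegral_one_add_mul_pow {w : Pt → ℝ} (hw : IntegrableOn w B1)
    (hg : Continuous g) (n : ℕ) :
    HasDerivAt (fun s => ∫ x in B1, (1 + s * g x) ^ n * w x) (n * ∫ x in B1, g x * w x) 0 := by
  obtain ⟨M, hM⟩ := (isCompact_closedBall (0 : Pt) 1).exists_bound_of_continuousOn hg.continuousOn
  have integrable (s : ℝ) : IntegrableOn (fun x => (1 + s * g x) ^ n * w x) B1 :=
    integrableOn_mul_of_continuous (by fun_prop) hw
  have deriv_integrable : IntegrableOn (fun x => n * (1 + 0 * g x) ^ (n - 1) * g x * w x) B1 :=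
    integrableOn_mul_of_continuous (by fun_prop) hw
  have diff (s : ℝ) (x : Pt) : HasDerivAt (fun s => (1 + s * g x) ^ n * w x)
      (n * (1 + s * g x) ^ (n - 1) * g x * w x) s := by
    simpa using ((((hasDerivAt_id s).mul_const (g x)).const_add 1).pow n).mul_const (w x)
  have deriv_bound (x : Pt) (hx : x ∈ B1) (s : ℝ) (hs : s ∈ Metric.ball (0 : ℝ) 1) :
      ‖n * (1 + s * g x) ^ (n - 1) * g x * w x‖ ≤ n * (1 + M) ^ (n - 1) * M * ‖w x‖ := by
    have g_le := hM x (Metric.ball_subset_closedBall hx)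
    have sg_le : ‖s * g x‖ ≤ M := by
      rw [norm_mul]
      exact (mul_le_of_le_one_left (norm_nonneg _) (mem_ball_zero_iff.1 hs).le).trans g_le
    have base_le : ‖1 + s * g x‖ ≤ 1 + M :=
      (norm_add_le _ _).trans (by rw [norm_one]; gcongr)
    rw [norm_mul, norm_mul, norm_mul, norm_pow, Real.norm_natCast]
    have := (norm_nonneg _).trans base_le
    gcongr
  refine (hasDerivAt_integral_of_dominated_loc_of_deriv_le (Metric.ball_mem_nhds 0 one_pos)
    (Eventually.of_forall fun s => (integrable s).aestronglyMeasurable) (integrable 0)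
    deriv_integrable.aestronglyMeasurable (ae_restrict_B1 deriv_bound) (hw.norm.const_mul _)
    (Eventually.of_forall fun x s _ => diff s x)).2.congr_deriv ?_
  simp [mul_assoc, integral_const_mul]

lemma hasDerivAt_mass_one_add_mul (hψ : FiniteEnergy ψ) (hg : Continuous g) :
    HasDerivAt (fun s : ℝ => mass fun x => (1 + s * g x) • ψ x)
      (2 * ∫ x in B1, g x * density ψ x) 0 := by
  have (s : ℝ) := density_smul (fun x => 1 + s * g x) ψ
  simpa only [mass, this, Nat.cast_ofNat] using
    hasDerivAt_setIntegral_one_add_mul_pow hψ.integrableOn_density hg 2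

lemma hasDerivAt_quarticEnergy_one_add_mul (hψ : FiniteEnergy ψ) (hg : Continuous g) :
    HasDerivAt (fun s : ℝ => quarticEnergy fun x => (1 + s * g x) • ψ x)
      (4 * ∫ x in B1, g x * density ψ x ^ 2) 0 := by
  have (s : ℝ) := density_smul (fun x => 1 + s * g x) ψ
  simpa only [quarticEnergy, this, mul_pow, ← pow_mul, Nat.reduceMul, Nat.cast_ofNat] using
    hasDerivAt_setIntegral_one_add_mul_pow hψ.integrableOn_density_sq hg 4

lemma gradient_one_add_mul (hg : Differentiable ℝ g) (s : ℝ) (x : Pt) :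
    ∇ (fun y => 1 + s * g y) x = s • ∇ g x := by
  refine HasGradientAt.gradient ?_
  rw [hasGradientAt_iff_hasFDerivAt, map_smul, toDual_gradient]
  exact ((hg x).hasFDerivAt.const_mul s).const_add 1

lemma hasDerivAt_quadEnergy_one_add_mul (hψ : FiniteEnergy ψ) (hg : ContDiff ℝ 1 g) (ε Ω₀ : ℝ) :
    HasDerivAt (fun s : ℝ => quadEnergy ε Ω₀ fun x => (1 + s * g x) • ψ x)
      (2 * (∫ x in B1, g x * (ε ^ 2 * kin (Ω₀ / ε) ψ x - 2 * (tfPotential Ω₀ x * density ψ x)))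
        + ∫ x in B1, ε ^ 2 * ⟪∇ g x, ∇ (density ψ) x⟫) 0 := by
  have grad_cont := continuous_gradient hg
  have quad_int := hψ.integrableOn_quadEnergy ε Ω₀
  have linear_int : IntegrableOn (fun x => ε ^ 2 * ⟪∇ g x, ∇ (density ψ) x⟫) B1 :=
    (hψ.integrableOn_inner_gradient_density grad_cont).const_mul _
  have square_int : IntegrableOn (fun x => ε ^ 2 *
      (⟪g x • ∇ g x, ∇ (density ψ) x⟫ + ‖∇ g x‖ ^ 2 * density ψ x)) B1 :=
    ((hψ.integrableOn_inner_gradient_density (hg.continuous.smul grad_cont)).add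
      (integrableOn_mul_of_continuous (grad_cont.norm.pow 2) hψ.integrableOn_density)).const_mul _
  have expand (s : ℝ) : quadEnergy ε Ω₀ (fun x => (1 + s * g x) • ψ x) =
      (∫ x in B1, (1 + s * g x) ^ 2 *
        (ε ^ 2 * kin (Ω₀ / ε) ψ x - 2 * (tfPotential Ω₀ x * density ψ x)))
      + s * (∫ x in B1, ε ^ 2 * ⟪∇ g x, ∇ (density ψ) x⟫) + s ^ 2 * ∫ x in B1, ε ^ 2 *
        (⟪g x • ∇ g x, ∇ (density ψ) x⟫ + ‖∇ g x‖ ^ 2 * density ψ x) := by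
    have scaled_int := integrableOn_mul_of_continuous
      (w := fun x => (1 + s * g x) ^ 2) (by fun_prop) quad_int
    rw [← integral_const_mul, ← integral_const_mul, ← integral_add scaled_int
      (linear_int.const_mul s), ← integral_add (by exact scaled_int.add (linear_int.const_mul s))
      (square_int.const_mul _), quadEnergy]
    refine setIntegral_congr_fun measurableSet_B1 fun x hx => ?_
    simp only [density_smul fun x => 1 + s * g x, kin_smul (g := fun x => 1 + s * g x) _
      (hψ.differentiableAt hx) (((hg.differentiable one_ne_zero x).const_mul s).const_add 1),
      gradient_one_add_mul (hg.differentiable one_ne_zero), inner_smul_left, norm_smul, mul_pow,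
      Real.norm_eq_abs, sq_abs, conj_trivial]
    ring
  rw [funext expand]
  refine (((hasDerivAt_setIntegral_one_add_mul_pow quad_int hg.continuous 2).add
    ((hasDerivAt_id 0).mul_const _)).add (((hasDerivAt_id 0).pow 2).mul_const _)).congr_deriv ?_
  simp

/-- The Lagrange multiplier of the mass constraint, up to the normalization of `reducedEnergy`. -/
def chemicalPotential (ε Ω₀ : ℝ) (Ψ : Pt → ℂ) : ℝ := quadEnergy ε Ω₀ Ψ + 2 * quarticEnergy Ψ

theorem integral_eulerLagrange (hΨ : IsGPMinimizer ε (Ω₀ / ε) Ψ) (hε : 0 < ε)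
    (hg : ContDiff ℝ 1 g) :
    (∫ x in B1, g x * (ε ^ 2 * kin (Ω₀ / ε) Ψ x - 2 * (tfPotential Ω₀ x * density Ψ x)))
      + 2 * (∫ x in B1, g x * density Ψ x ^ 2)
      + ε ^ 2 / 2 * (∫ x in B1, ⟪∇ g x, ∇ (density Ψ) x⟫)
      = chemicalPotential ε Ω₀ Ψ * ∫ x in B1, g x * density Ψ x := by
  have fin := finiteEnergy_of_isGPMinimizer hΨ
  have unit := mass_eq_one_of_isGPMinimizer hΨ
  set ψ : ℝ → Pt → ℂ := fun s x => (1 + s * g x) • Ψ x with ψ_def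
  have at_zero : ψ 0 = Ψ := by simp [ψ_def]
  have mass_deriv := hasDerivAt_mass_one_add_mul fin hg.continuous
  have quartic_deriv := hasDerivAt_quarticEnergy_one_add_mul fin hg.continuous
  have quad_deriv := hasDerivAt_quadEnergy_one_add_mul fin hg ε Ω₀
  have minimum : IsLocalMin (fun s => quadEnergy ε Ω₀ (ψ s) * mass (ψ s) + quarticEnergy (ψ s)
      - reducedEnergy ε Ω₀ Ψ * mass (ψ s) ^ 2) 0 := by
    have mass_pos : ∀ᶠ s in 𝓝 0, 0 < mass (ψ s) :=
      mass_deriv.continuousAt.eventually (lt_mem_nhds (by simp [unit]))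
    filter_upwards [mass_pos] with s pos
    have := reducedEnergy_mul_mass_sq_le hΨ hε
      (fin.smul (contDiff_const.add (contDiff_const.mul hg))) pos
    simp only [at_zero, unit, reducedEnergy]
    rw [reducedEnergy] at this
    linarith
  have stationary := minimum.hasDerivAt_eq_zero
    (((quad_deriv.mul mass_deriv).add quartic_deriv).sub ((mass_deriv.pow 2).const_mul _))
  simp only [zero_mul, add_zero, one_smul, unit, integral_const_mul, Nat.cast_ofNat,
    Nat.add_one_sub_one, pow_one, mul_one, reducedEnergy] at stationary
  rw [chemicalPotential]
  linarith

end EulerLagrange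

section Agmon

variable {ε Ω₀ Γ s t β : ℝ} {ψ Ψ : Pt → ℂ} {g : Pt → ℝ}

lemma FiniteEnergy.integrableOn_eulerLagrange (hψ : FiniteEnergy ψ) (ε Ω₀ τ : ℝ) :
    IntegrableOn (fun x => ε ^ 2 * kin (Ω₀ / ε) ψ x +
      (2 * density ψ x - 2 * tfPotential Ω₀ x - τ) * density ψ x) B1 := by
  refine IntegrableOn.congr_fun (((hψ.integrableOn_quadEnergy ε Ω₀).add
    (hψ.integrableOn_density_sq.const_mul 2)).sub (hψ.integrableOn_density.const_mul τ))
    (fun x _ => ?_) measurableSet_B1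
  simp only [Pi.add_apply, Pi.sub_apply]
  ring

lemma integral_mul_eulerLagrange_eq (hΨ : IsGPMinimizer ε (Ω₀ / ε) Ψ) (hε : 0 < ε)
    (hg : ContDiff ℝ 1 g) :
    ∫ x in B1, g x * (ε ^ 2 * kin (Ω₀ / ε) Ψ x +
      (2 * density Ψ x - 2 * tfPotential Ω₀ x - chemicalPotential ε Ω₀ Ψ) * density Ψ x) =
    -(ε ^ 2 / 2) * ∫ x in B1, ⟪∇ g x, ∇ (density Ψ) x⟫ := by
  have fin := finiteEnergy_of_isGPMinimizer hΨ
  have quad_int := integrableOn_mul_of_continuous hg.continuous (fin.integrableOn_quadEnergy ε Ω₀)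
  have sq_int := (integrableOn_mul_of_continuous hg.continuous
    fin.integrableOn_density_sq).const_mul 2
  have density_int := (integrableOn_mul_of_continuous hg.continuous
    fin.integrableOn_density).const_mul (chemicalPotential ε Ω₀ Ψ)
  have euler_lagrange := integral_eulerLagrange hΨ hε hg
  rw [← integral_const_mul 2, ← integral_const_mul (chemicalPotential ε Ω₀ Ψ)] at euler_lagrange
  rw [neg_mul, ← sub_eq_iff_eq_add'.2 euler_lagrange.symm, neg_sub, ← integral_add quad_int sq_int,
    ← integral_sub (by exact quad_int.add sq_int) density_int]
  congr 1 with x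
  ring

lemma neg_inner_gradient_density_le {b c : ℝ} {x : Pt} (hψ : DifferentiableAt ℝ ψ x)
    (hb : 0 ≤ b) (hc : 0 ≤ c) (hg : ‖∇ g x‖ ^ 2 ≤ 4 * (b * c)) (Ω : ℝ) :
    -⟪∇ g x, ∇ (density ψ) x⟫ ≤ 2 * (b * kin Ω ψ x + c * density ψ x) := by
  have u_nonneg := density_nonneg ψ x
  have k_nonneg := kin_nonneg Ω ψ x
  refine (neg_le_abs _).trans ((abs_real_inner_le_norm _ _).trans
    (abs_le_of_sq_le_sq' ?_ (by positivity)).2)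
  calc (‖∇ g x‖ * ‖∇ (density ψ) x‖) ^ 2 = ‖∇ g x‖ ^ 2 * ‖∇ (density ψ) x‖ ^ 2 := mul_pow _ _ 2
    _ ≤ 4 * (b * c) * (4 * (density ψ x * kin Ω ψ x)) := by
      gcongr
      exact norm_gradient_density_sq_le Ω hψ
    _ ≤ (2 * (b * kin Ω ψ x + c * density ψ x)) ^ 2 := by
      nlinarith [sq_nonneg (b * kin Ω ψ x - c * density ψ x)]

-- Testing the Euler–Lagrange equation with `g Ψ`, the kinetic term absorbs the cross term.
lemma integral_mul_density_le_of_gap {a b : ℝ} (hΨ : IsGPMinimizer ε (Ω₀ / ε) Ψ) (hε : 0 < ε)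
    (hg : ContDiff ℝ 1 g) (g_nonneg : ∀ x, 0 ≤ g x) (ha : 0 ≤ a) (hb : 0 ≤ b)
    (grad_le : ∀ x ∈ B1, ‖∇ g x‖ ^ 2 ≤ 4 * (g x * (a * g x + b)))
    (gap : ∀ x ∈ B1, g x ≠ 0 → β ≤ -2 * tfPotential Ω₀ x - chemicalPotential ε Ω₀ Ψ)
    (hβ : 0 < β) (ha_le : 2 * ε ^ 2 * a ≤ β) :
    ∫ x in B1, g x * density Ψ x ≤ 2 * b * ε ^ 2 / β := by
  have fin := finiteEnergy_of_isGPMinimizer hΨ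
  have weight_int := integrableOn_mul_of_continuous hg.continuous fin.integrableOn_density
  have inner_int := fin.integrableOn_inner_gradient_density (continuous_gradient hg)
  have el_int := integrableOn_mul_of_continuous hg.continuous
    (fin.integrableOn_eulerLagrange ε Ω₀ (chemicalPotential ε Ω₀ Ψ))
  have pointwise : ∀ x ∈ B1,
      β / 2 * (g x * density Ψ x) - ε ^ 2 * b * density Ψ x ≤ g x * (ε ^ 2 * kin (Ω₀ / ε) Ψ x +
        (2 * density Ψ x - 2 * tfPotential Ω₀ x - chemicalPotential ε Ω₀ Ψ) * density Ψ x) +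
        ε ^ 2 / 2 * ⟪∇ g x, ∇ (density Ψ) x⟫ := by
    intro x hx
    have u_nonneg := density_nonneg Ψ x
    have gu_nonneg := mul_nonneg (g_nonneg x) u_nonneg
    have cross := neg_inner_gradient_density_le (fin.differentiableAt hx) (g_nonneg x)
      (add_nonneg (mul_nonneg ha (g_nonneg x)) hb) (grad_le x hx) (Ω₀ / ε)
    have gap_term : β * (g x * density Ψ x) ≤
        (-2 * tfPotential Ω₀ x - chemicalPotential ε Ω₀ Ψ) * (g x * density Ψ x) := by
      rcases eq_or_ne (g x) 0 with zero | ne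
      · simp [zero]
      · exact mul_le_mul_of_nonneg_right (gap x hx ne) gu_nonneg
    have absorb := mul_le_mul_of_nonneg_right ha_le gu_nonneg
    have := mul_le_mul_of_nonneg_left cross (by positivity : 0 ≤ ε ^ 2 / 2)
    have : 0 ≤ g x * density Ψ x * density Ψ x := mul_nonneg gu_nonneg u_nonneg
    linarith
  have integrated := setIntegral_mono_on ((weight_int.const_mul (β / 2)).sub
    (fin.integrableOn_density.const_mul (ε ^ 2 * b))) (el_int.add (inner_int.const_mul (ε ^ 2 / 2)))
    measurableSet_B1 pointwise
  rw [integral_sub' (weight_int.const_mul _) (fin.integrableOn_density.const_mul _),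
    integral_add' el_int (inner_int.const_mul _), integral_const_mul, integral_const_mul,
    integral_const_mul, ← mass, mass_eq_one_of_isGPMinimizer hΨ,
    integral_mul_eulerLagrange_eq hΨ hε hg] at integrated
  rw [le_div_iff₀ hβ]
  linarith

/-- The weight of the Agmon estimate, supported where `‖y‖² ≤ s`. -/
def agmonWeight (Γ s : ℝ) (y : Pt) : ℝ :=
  max (s - ‖y‖ ^ 2) 0 ^ 2 * exp (2 * Γ * (s - ‖y‖ ^ 2))

lemma agmonWeight_nonneg (Γ s : ℝ) (y : Pt) : 0 ≤ agmonWeight Γ s y := by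
  unfold agmonWeight
  positivity

lemma contDiff_agmonWeight (Γ s : ℝ) : ContDiff ℝ 1 (agmonWeight Γ s) := by
  have inside : ContDiff ℝ 1 fun y : Pt => s - ‖y‖ ^ 2 := contDiff_const.sub (contDiff_norm_sq ℝ)
  exact ((contDiff_max_zero_pow 0).comp inside).mul (contDiff_const.mul inside).exp

lemma gradient_agmonWeight (Γ s : ℝ) (y : Pt) :
    ∇ (agmonWeight Γ s) y = -(4 * (max (s - ‖y‖ ^ 2) 0 * (1 + Γ * max (s - ‖y‖ ^ 2) 0) *
      exp (2 * Γ * (s - ‖y‖ ^ 2)))) • y := by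
  have profile (t : ℝ) : HasDerivAt (fun t => max t 0 ^ 2 * exp (2 * Γ * t))
      (2 * (max t 0 * (1 + Γ * max t 0) * exp (2 * Γ * t))) t := by
    refine ((hasDerivAt_max_zero_pow 0 t).mul
      ((hasDerivAt_id t).const_mul (2 * Γ)).exp).congr_deriv ?_
    simp only [id, zero_add, pow_one]
    push_cast
    ring
  have := (hasGradientAt_comp_sub_norm_sq (s := s) (c := (0 : Pt)) (x := y) (profile _)).gradient
  simp only [sub_zero, ← mul_assoc] at this ⊢
  norm_num only at this
  exact this

-- Where `Γ t ≥ 1` the weight grows at rate `2Γ`; where `Γ t < 1` everything is bounded.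
lemma exp_mul_one_add_sq_le (hΓ : 0 ≤ Γ) (ht : 0 ≤ t) :
    exp (2 * Γ * t) * (1 + Γ * t) ^ 2 ≤ 4 * Γ ^ 2 * (t ^ 2 * exp (2 * Γ * t)) + 4 * exp 2 := by
  rcases le_total 1 (Γ * t) with large | small
  · have : exp (2 * Γ * t) * (1 + Γ * t) ^ 2 ≤ exp (2 * Γ * t) * (2 * (Γ * t)) ^ 2 := by
      gcongr
      linarith
    linarith [exp_pos 2]
  · have : 0 ≤ 1 + Γ * t := by positivity
    have : exp (2 * Γ * t) * (1 + Γ * t) ^ 2 ≤ exp 2 * 2 ^ 2 := by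
      gcongr <;> linarith
    have := exp_pos (2 * Γ * t)
    have : 0 ≤ 4 * Γ ^ 2 * (t ^ 2 * exp (2 * Γ * t)) := by positivity
    linarith

lemma norm_gradient_agmonWeight_sq_le (hΓ : 0 ≤ Γ) (s : ℝ) {y : Pt} (hy : y ∈ B1) :
    ‖∇ (agmonWeight Γ s) y‖ ^ 2 ≤
      4 * (agmonWeight Γ s y * (16 * Γ ^ 2 * agmonWeight Γ s y + 16 * exp 2)) := by
  have inside : ‖y‖ ^ 2 ≤ 1 := pow_le_one₀ (norm_nonneg _) (norm_lt_one_of_mem_B1 hy).le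
  rw [gradient_agmonWeight, agmonWeight, norm_smul, norm_neg, mul_pow, Real.norm_eq_abs, sq_abs]
  refine (mul_le_of_le_one_right (sq_nonneg _) inside).trans ?_
  rcases le_total (s - ‖y‖ ^ 2) 0 with neg | pos
  · simp [max_eq_right neg]
  · rw [max_eq_left pos]
    set t := s - ‖y‖ ^ 2
    have := mul_le_mul_of_nonneg_left (exp_mul_one_add_sq_le hΓ pos)
      (by positivity : 0 ≤ 16 * (t ^ 2 * exp (2 * Γ * t)))
    linarith

lemma setIntegral_density_le_of_gap {K : Set Pt} (hΨ : IsGPMinimizer ε (Ω₀ / ε) Ψ) (hε : 0 < ε)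
    (hβ : 0 < β)
    (gap : ∀ y, ‖y‖ ^ 2 < s → β ≤ -2 * tfPotential Ω₀ y - chemicalPotential ε Ω₀ Ψ)
    (hΓ : 0 ≤ Γ) (hΓ_le : 32 * ε ^ 2 * Γ ^ 2 ≤ β) (ht : 0 < t) (hK : MeasurableSet K)
    (K_subset : K ⊆ B1) (K_le : ∀ y ∈ K, ‖y‖ ^ 2 ≤ s - t) :
    ∫ y in K, density Ψ y ≤ (t ^ 2 * exp (2 * Γ * t))⁻¹ * (32 * exp 2 * ε ^ 2 / β) := by
  have fin := finiteEnergy_of_isGPMinimizer hΨ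
  have weight_int := integrableOn_mul_of_continuous (contDiff_agmonWeight Γ s).continuous
    fin.integrableOn_density
  have decay := integral_mul_density_le_of_gap (a := 16 * Γ ^ 2) (b := 16 * exp 2) hΨ hε
    (contDiff_agmonWeight Γ s) (agmonWeight_nonneg Γ s) (by positivity) (by positivity)
    (fun y hy => norm_gradient_agmonWeight_sq_le hΓ s hy)
    (fun y _ ne => gap y (not_le.1 fun le => ne (by
      simp [agmonWeight, max_eq_right (sub_nonpos.2 le)]))) hβ (by linarith)
  rw [le_inv_mul_iff₀ (by positivity), ← integral_const_mul]
  calc ∫ y in K, t ^ 2 * exp (2 * Γ * t) * density Ψ y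
      ≤ ∫ y in K, agmonWeight Γ s y * density Ψ y := by
        refine setIntegral_mono_on ((fin.integrableOn_density.mono_set K_subset).const_mul _)
          (weight_int.mono_set K_subset) hK fun y hy => ?_
        have deep : t ≤ s - ‖y‖ ^ 2 := by linarith [K_le y hy]
        refine mul_le_mul_of_nonneg_right ?_ (density_nonneg Ψ y)
        rw [agmonWeight, max_eq_left (ht.le.trans deep)]
        gcongr
    _ ≤ ∫ y in B1, agmonWeight Γ s y * density Ψ y :=
        setIntegral_mono_set weight_int (ae_restrict_B1 fun y _ =>
          mul_nonneg (agmonWeight_nonneg Γ s y) (density_nonneg Ψ y)) K_subset.eventuallyLE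
    _ ≤ 32 * exp 2 * ε ^ 2 / β := decay.trans_eq (by ring)

lemma weaklySubharmonicOn_density {K : Set Pt} (hΨ : IsGPMinimizer ε (Ω₀ / ε) Ψ) (hε : 0 < ε)
    (hK : IsClosed K) (K_subset : K ⊆ B1)
    (gap : ∀ y ∈ K, chemicalPotential ε Ω₀ Ψ ≤ -2 * tfPotential Ω₀ y) :
    WeaklySubharmonicOn (density Ψ) K := by
  intro g hg g_nonneg g_zero
  have gradient_zero (y : Pt) (hy : y ∉ B1) : ⟪∇ g y, ∇ (density Ψ) y⟫ = 0 := by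
    rw [gradient, fderiv_eq_zero_of_forall_notMem_eq_zero hK g_zero y fun h => hy (K_subset h),
      map_zero, inner_zero_left]
  rw [← setIntegral_eq_integral_of_forall_compl_eq_zero gradient_zero]
  have nonneg : 0 ≤ ∫ x in B1, g x * (ε ^ 2 * kin (Ω₀ / ε) Ψ x +
      (2 * density Ψ x - 2 * tfPotential Ω₀ x - chemicalPotential ε Ω₀ Ψ) * density Ψ x) := by
    refine integral_nonneg fun y => ?_
    by_cases hy : y ∈ K
    · have u_nonneg := density_nonneg Ψ y
      have := mul_nonneg (by linarith [gap y hy] : 0 ≤ 2 * density Ψ y - 2 * tfPotential Ω₀ y -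
        chemicalPotential ε Ω₀ Ψ) u_nonneg
      exact mul_nonneg (g_nonneg y)
        (add_nonneg (mul_nonneg (sq_nonneg ε) (kin_nonneg _ Ψ y)) this)
    · simp [g_zero y hy]
  rw [integral_mul_eulerLagrange_eq hΨ hε hg] at nonneg
  exact nonpos_of_mul_nonneg_right nonneg (by rw [neg_lt_zero]; positivity)

lemma density_le_of_gap {r : ℝ} {x : Pt} (hΨ : IsGPMinimizer ε (Ω₀ / ε) Ψ) (hε : 0 < ε)
    (hβ : 0 < β)
    (gap : ∀ y, ‖y‖ ^ 2 < s → β ≤ -2 * tfPotential Ω₀ y - chemicalPotential ε Ω₀ Ψ)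
    (hs : s ≤ 1) (hΓ : 0 ≤ Γ) (hΓ_le : 32 * ε ^ 2 * Γ ^ 2 ≤ β) (ht : 0 < t) (hr : 0 < r)
    (ball_le : ∀ y ∈ Metric.closedBall x r, ‖y‖ ^ 2 ≤ s - t) :
    density Ψ x ≤ (capMass (Fin 2) * r ^ 2)⁻¹ *
      ((t ^ 2 * exp (2 * Γ * t))⁻¹ * (32 * exp 2 * ε ^ 2 / β)) := by
  have fin := finiteEnergy_of_isGPMinimizer hΨ
  have ball_subset : Metric.closedBall x r ⊆ B1 := fun y hy => mem_ball_zero_iff.2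
    ((sq_lt_one_iff₀ (norm_nonneg y)).1 (by linarith [ball_le y hy]))
  have subharmonic := weaklySubharmonicOn_density hΨ hε Metric.isClosed_closedBall ball_subset
    fun y hy => by linarith [gap y (by linarith [ball_le y hy])]
  have mean_value := subharmonic.capMass_mul_le hr (fun y _ => density_nonneg Ψ y)
    (fun y hy => (hasFDerivAt_density
      (fin.differentiableAt (ball_subset hy))).differentiableAt)
    (fin.integrableOn_density.mono_set ball_subset)
    (fin.integrableOn_gradient_density.mono_set ball_subset)
  rw [Fintype.card_fin] at mean_value
  have mass_le := setIntegral_density_le_of_gap hΨ hε hβ gap hΓ hΓ_le ht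
    Metric.isClosed_closedBall.measurableSet ball_subset ball_le
  have pos := capMass_pos (Fin 2)
  rw [mul_inv, mul_assoc, le_inv_mul_iff₀ pos]
  exact mean_value.trans (by gcongr)

end Agmon

section Hole

variable {Ω₀ e : ℝ} {Ψ : Pt → ℂ}

lemma gap_of_norm_sq_lt {τ : ℝ} (hτ : τ ≤ Ω₀ ^ 2 * R0 Ω₀ * e / 16) {y : Pt}
    (hy : ‖y‖ ^ 2 < R0 Ω₀ ^ 2 - R0 Ω₀ * e / 2) :
    Ω₀ ^ 2 * R0 Ω₀ * e / 16 ≤ -2 * tfPotential Ω₀ y - τ := by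
  rw [tfPotential]
  nlinarith [sq_nonneg Ω₀]

lemma norm_sq_le_of_mem_closedBall {R : ℝ} {x y : Pt} (he : 0 < e) (hx : ‖x‖ ≤ R - e)
    (hy : y ∈ Metric.closedBall x (e / 4)) :
    ‖y‖ ^ 2 ≤ R ^ 2 - R * e / 2 - R * (R - e - ‖x‖ + e / 4) := by
  have norm_le : ‖y‖ ≤ ‖x‖ + e / 4 := by
    have := norm_le_norm_add_norm_sub' y x
    rw [mem_closedBall_iff_norm] at hy
    linarith
  nlinarith [norm_nonneg x, norm_nonneg y]

theorem density_le_of_chemicalPotential_le (h : 4 / √π < Ω₀) (he : 0 < e)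
    (hΨ : IsGPMinimizer (e ^ 3) (Ω₀ / e ^ 3) Ψ)
    (hτ : chemicalPotential (e ^ 3) Ω₀ Ψ ≤ Ω₀ ^ 2 * R0 Ω₀ * e / 16)
    {x : Pt} (hx : ‖x‖ ≤ R0 Ω₀ - e) :
    density Ψ x ≤ 131072 * exp 2 / (capMass (Fin 2) * R0 Ω₀ ^ 3 * Ω₀ ^ 2) * e *
      exp (-(2 * √(Ω₀ ^ 2 * R0 Ω₀ / 512) * R0 Ω₀ * (R0 Ω₀ - e - ‖x‖) ^ 2 / e ^ 2)) := by
  have Ω₀_pos := pos_of_four_div_sqrt_pi_lt h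
  have R_pos := R0_pos h
  have R_lt := R0_lt_one h
  have cap_pos := capMass_pos (Fin 2)
  set R := R0 Ω₀
  have depth_nonneg : 0 ≤ R - e - ‖x‖ := by linarith
  have depth_le : R - e - ‖x‖ ≤ 1 := by linarith [norm_nonneg x]
  have e_le : e ≤ 1 := by linarith [norm_nonneg x]
  set d := R - e - ‖x‖
  set κ := √(Ω₀ ^ 2 * R / 512)
  have κ_sq : κ ^ 2 = Ω₀ ^ 2 * R / 512 := Real.sq_sqrt (by positivity)
  have rate : 32 * (e ^ 3) ^ 2 * (κ / e ^ 2) ^ 2 ≤ Ω₀ ^ 2 * R * e / 16 := by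
    have : 32 * (e ^ 3) ^ 2 * (κ / e ^ 2) ^ 2 = Ω₀ ^ 2 * R * e / 16 * e := by
      rw [div_pow, κ_sq]
      field_simp
      norm_num
    exact this.trans_le (mul_le_of_le_one_right (by positivity) e_le)
  have exponent : 2 * κ * R * d ^ 2 / e ^ 2 ≤ 2 * (κ / e ^ 2) * (R * (d + e / 4)) := by
    rw [show 2 * (κ / e ^ 2) * (R * (d + e / 4)) = 2 * κ * R * (d + e / 4) / e ^ 2 by ring]
    gcongr
    nlinarith
  refine (density_le_of_gap (s := R ^ 2 - R * e / 2) (r := e / 4) hΨ (by positivity)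
    (by positivity) (fun y hy => gap_of_norm_sq_lt hτ hy) (by nlinarith) (by positivity) rate
    (by positivity : 0 < R * (d + e / 4)) (by positivity)
    (fun y hy => norm_sq_le_of_mem_closedBall he hx hy)).trans ?_
  calc _ ≤ (capMass (Fin 2) * (e / 4) ^ 2)⁻¹ * (((R * (e / 4)) ^ 2 *
        exp (2 * κ * R * d ^ 2 / e ^ 2))⁻¹ *
        (32 * exp 2 * (e ^ 3) ^ 2 / (Ω₀ ^ 2 * R * e / 16))) := by
        gcongr
        linarith
    _ = _ := by
        rw [exp_neg]
        field_simp
        norm_num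

end Hole

section Excess

variable {ε Ω₀ : ℝ} {Ψ ψ : Pt → ℂ}

/-- The integrand of `excess`. -/
def excessDensity (ε Ω₀ : ℝ) (ψ : Pt → ℂ) (x : Pt) : ℝ :=
  ε ^ 2 * kin (Ω₀ / ε) ψ x + (density ψ x - (tfPotential Ω₀ x)⁺) ^ 2
    + 2 * ((tfPotential Ω₀ x)⁻ * density ψ x)

/-- The reduced energy measured from the Thomas–Fermi energy, written as an integral of nonnegative
terms. -/
def excess (ε Ω₀ : ℝ) (ψ : Pt → ℂ) : ℝ := ∫ x in B1, excessDensity ε Ω₀ ψ x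

lemma continuous_tfPotential_posPart (Ω₀ : ℝ) : Continuous fun x => (tfPotential Ω₀ x)⁺ :=
  (continuous_tfPotential Ω₀).sup continuous_const

lemma excessDensity_nonneg (ε Ω₀ : ℝ) (ψ : Pt → ℂ) (x : Pt) : 0 ≤ excessDensity ε Ω₀ ψ x := by
  have := kin_nonneg (Ω₀ / ε) ψ x
  have := mul_nonneg (negPart_nonneg (tfPotential Ω₀ x)) (density_nonneg ψ x)
  unfold excessDensity
  positivity

lemma excessDensity_eq (ε Ω₀ : ℝ) (ψ : Pt → ℂ) (x : Pt) : excessDensity ε Ω₀ ψ x =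
    ε ^ 2 * kin (Ω₀ / ε) ψ x - 2 * (tfPotential Ω₀ x * density ψ x) + density ψ x ^ 2
      + (tfPotential Ω₀ x)⁺ ^ 2 := by
  have split := posPart_sub_negPart (tfPotential Ω₀ x)
  rw [excessDensity]
  linear_combination -2 * density ψ x * split

lemma integrableOn_tfPotential_posPart_sq (Ω₀ : ℝ) :
    IntegrableOn (fun x => (tfPotential Ω₀ x)⁺ ^ 2) B1 :=
  integrableOn_of_continuous ((continuous_tfPotential_posPart Ω₀).pow 2)

lemma FiniteEnergy.integrableOn_reducedEnergy (hψ : FiniteEnergy ψ) (ε Ω₀ : ℝ) : IntegrableOn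
    (fun x => ε ^ 2 * kin (Ω₀ / ε) ψ x - 2 * (tfPotential Ω₀ x * density ψ x) + density ψ x ^ 2)
    B1 :=
  (hψ.integrableOn_quadEnergy ε Ω₀).add hψ.integrableOn_density_sq

lemma FiniteEnergy.integrableOn_excessDensity (hψ : FiniteEnergy ψ) (ε Ω₀ : ℝ) :
    IntegrableOn (excessDensity ε Ω₀ ψ) B1 := by
  simp only [funext (excessDensity_eq ε Ω₀ ψ)]
  exact (hψ.integrableOn_reducedEnergy ε Ω₀).add (integrableOn_tfPotential_posPart_sq Ω₀)

lemma FiniteEnergy.excess_eq (hψ : FiniteEnergy ψ) (ε Ω₀ : ℝ) :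
    excess ε Ω₀ ψ = reducedEnergy ε Ω₀ ψ + ∫ x in B1, (tfPotential Ω₀ x)⁺ ^ 2 := by
  simp only [excess, excessDensity_eq]
  rw [integral_add (hψ.integrableOn_reducedEnergy ε Ω₀) (integrableOn_tfPotential_posPart_sq Ω₀),
    integral_add (hψ.integrableOn_quadEnergy ε Ω₀) hψ.integrableOn_density_sq, reducedEnergy,
    quadEnergy, quarticEnergy]

lemma sq_setIntegral_B1_le {f : Pt → ℝ} (hf : IntegrableOn f B1)
    (hf_sq : IntegrableOn (fun x => f x ^ 2) B1) :
    (∫ x in B1, f x) ^ 2 ≤ π * ∫ x in B1, f x ^ 2 := by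
  set m := ∫ x in B1, f x
  have variance : ∫ x in B1, (f x - m / π) ^ 2 = (∫ x in B1, f x ^ 2) - m ^ 2 / π := by
    have expand (x : Pt) : (f x - m / π) ^ 2 = f x ^ 2 - 2 * (m / π) * f x + (m / π) ^ 2 := by ring
    simp only [expand]
    rw [integral_add (by exact hf_sq.sub (hf.const_mul _)) (integrable_const _),
      integral_sub hf_sq (hf.const_mul _), integral_const_mul, setIntegral_const_B1]
    field_simp
    ring
  have nonneg : 0 ≤ ∫ x in B1, (f x - m / π) ^ 2 := integral_nonneg fun _ => sq_nonneg _
  rw [variance, sub_nonneg, div_le_iff₀ pi_pos] at nonneg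
  linarith

lemma FiniteEnergy.integrableOn_density_sub_sq (hψ : FiniteEnergy ψ) (Ω₀ : ℝ) :
    IntegrableOn (fun x => (density ψ x - (tfPotential Ω₀ x)⁺) ^ 2) B1 := by
  have expand (x : Pt) : (density ψ x - (tfPotential Ω₀ x)⁺) ^ 2 = density ψ x ^ 2
      - 2 * ((tfPotential Ω₀ x)⁺ * density ψ x) + (tfPotential Ω₀ x)⁺ ^ 2 := by ring
  simp only [expand]
  exact (hψ.integrableOn_density_sq.sub ((integrableOn_mul_of_continuous
    (continuous_tfPotential_posPart Ω₀) hψ.integrableOn_density).const_mul 2)).add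
    (integrableOn_tfPotential_posPart_sq Ω₀)

lemma density_sub_sq_le_excessDensity (ε Ω₀ : ℝ) (ψ : Pt → ℂ) (x : Pt) :
    (density ψ x - (tfPotential Ω₀ x)⁺) ^ 2 ≤ excessDensity ε Ω₀ ψ x := by
  have := mul_nonneg (sq_nonneg ε) (kin_nonneg (Ω₀ / ε) ψ x)
  have := mul_nonneg (negPart_nonneg (tfPotential Ω₀ x)) (density_nonneg ψ x)
  unfold excessDensity
  linarith

lemma FiniteEnergy.sq_mass_sub_le (hψ : FiniteEnergy ψ) (ε Ω₀ : ℝ) :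
    (mass ψ - ∫ x in B1, (tfPotential Ω₀ x)⁺) ^ 2 ≤ π * excess ε Ω₀ ψ := by
  have tf_int := integrableOn_of_continuous (continuous_tfPotential_posPart Ω₀)
  rw [mass, ← integral_sub hψ.integrableOn_density tf_int]
  have sq_int := hψ.integrableOn_density_sub_sq Ω₀
  refine (sq_setIntegral_B1_le (hψ.integrableOn_density.sub tf_int) sq_int).trans ?_
  exact mul_le_mul_of_nonneg_left (integral_mono sq_int (hψ.integrableOn_excessDensity ε Ω₀)
    (density_sub_sq_le_excessDensity ε Ω₀ ψ)) pi_pos.le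

lemma excessDensity_const_smul_le (c : ℝ) (hc : c ^ 2 ≤ 2) {x : Pt}
    (hψ : DifferentiableAt ℝ ψ x) : excessDensity ε Ω₀ (fun y => c • ψ y) x ≤
      8 * excessDensity ε Ω₀ ψ x + 2 * (c ^ 2 - 1) ^ 2 * (tfPotential Ω₀ x)⁺ ^ 2 := by
  have kin_term := mul_nonneg (sq_nonneg ε) (kin_nonneg (Ω₀ / ε) ψ x)
  have hole_term := mul_nonneg (negPart_nonneg (tfPotential Ω₀ x)) (density_nonneg ψ x)
  simp only [excessDensity, kin_const_smul _ c hψ, density_smul fun _ => c]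
  set u := density ψ x
  set ρ := (tfPotential Ω₀ x)⁺
  have square : (c ^ 2 * u - ρ) ^ 2 ≤ 8 * (u - ρ) ^ 2 + 2 * (c ^ 2 - 1) ^ 2 * ρ ^ 2 := by
    have four : c ^ 2 * c ^ 2 ≤ 2 * 2 := by gcongr
    nlinarith [sq_nonneg (c ^ 2 * (u - ρ) - (c ^ 2 - 1) * ρ), sq_nonneg (u - ρ)]
  nlinarith

lemma excess_le_of_isGPMinimizer (hΨ : IsGPMinimizer ε (Ω₀ / ε) Ψ) (hε : 0 < ε)
    (hψ : FiniteEnergy ψ) (normalized : mass ψ = 1) : excess ε Ω₀ Ψ ≤ excess ε Ω₀ ψ := by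
  rw [(finiteEnergy_of_isGPMinimizer hΨ).excess_eq, hψ.excess_eq]
  have := reducedEnergy_le_of_isGPMinimizer hΨ hε hψ normalized
  linarith

lemma FiniteEnergy.excess_const_smul_le (hψ : FiniteEnergy ψ) (ε Ω₀ c : ℝ) (hc : c ^ 2 ≤ 2) :
    excess ε Ω₀ (fun x => c • ψ x) ≤
      8 * excess ε Ω₀ ψ + 2 * (c ^ 2 - 1) ^ 2 * ∫ x in B1, (tfPotential Ω₀ x)⁺ ^ 2 := by
  have excess_int := (hψ.integrableOn_excessDensity ε Ω₀).const_mul 8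
  have tf_int := (integrableOn_tfPotential_posPart_sq Ω₀).const_mul (2 * (c ^ 2 - 1) ^ 2)
  rw [excess, excess, ← integral_const_mul, ← integral_const_mul, ← integral_add excess_int tf_int]
  exact setIntegral_mono_on
    ((hψ.smul (g := fun _ => c) contDiff_const).integrableOn_excessDensity ε Ω₀)
    (excess_int.add tf_int) measurableSet_B1
    fun x hx => excessDensity_const_smul_le c hc (hψ.differentiableAt hx)

lemma excess_le_mul_excess_of_isGPMinimizer (hΨ : IsGPMinimizer ε (Ω₀ / ε) Ψ) (hε : 0 < ε)
    (tf_mass : ∫ x in B1, (tfPotential Ω₀ x)⁺ = 1) (hψ : FiniteEnergy ψ)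
    (small : π * excess ε Ω₀ ψ ≤ 1 / 4) :
    excess ε Ω₀ Ψ ≤ 8 * (1 + π * ∫ x in B1, (tfPotential Ω₀ x)⁺ ^ 2) * excess ε Ω₀ ψ := by
  set T := ∫ x in B1, (tfPotential Ω₀ x)⁺ ^ 2
  have T_nonneg : 0 ≤ T := integral_nonneg fun _ => sq_nonneg _
  set ν := mass ψ
  have mass_near_one : (ν - 1) ^ 2 ≤ π * excess ε Ω₀ ψ := by
    simpa only [tf_mass] using hψ.sq_mass_sub_le ε Ω₀
  have ν_ge : 1 / 2 ≤ ν := by nlinarith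
  have ν_pos : 0 < ν := by linarith
  have scale_sq : (√ν)⁻¹ ^ 2 = ν⁻¹ := by rw [inv_pow, Real.sq_sqrt ν_pos.le]
  have inv_le : ν⁻¹ ≤ 2 := by simpa using inv_anti₀ (by norm_num) ν_ge
  have correction : (ν⁻¹ - 1) ^ 2 ≤ 4 * (π * excess ε Ω₀ ψ) := by
    have : (ν⁻¹ - 1) ^ 2 = ν⁻¹ ^ 2 * (ν - 1) ^ 2 := by
      field_simp
      ring
    rw [this]
    have : ν⁻¹ ^ 2 ≤ 2 ^ 2 := by gcongr
    nlinarith [sq_nonneg (ν - 1)]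
  have minimal := excess_le_of_isGPMinimizer hΨ hε
    (hψ.smul (g := fun _ => (√ν)⁻¹) contDiff_const) (mass_inv_sqrt_smul ν_pos)
  have scaled := hψ.excess_const_smul_le ε Ω₀ (√ν)⁻¹ (scale_sq.trans_le inv_le)
  rw [scale_sq] at scaled
  linarith [mul_le_mul_of_nonneg_right correction T_nonneg]

-- The cross term is absorbed by `0 ≤ (u - (1 + r) ρ)² / r`, with `u = |ψ|²` and `ρ = V⁺`.
lemma FiniteEnergy.chemicalPotential_le (hψ : FiniteEnergy ψ) (ε Ω₀ : ℝ) {r : ℝ} (hr : 0 < r) :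
    chemicalPotential ε Ω₀ ψ ≤
      (2 + r⁻¹) * excess ε Ω₀ ψ + r * ∫ x in B1, (tfPotential Ω₀ x)⁺ ^ 2 := by
  have excess_int := (hψ.integrableOn_excessDensity ε Ω₀).const_mul (2 + r⁻¹)
  have tf_int := (integrableOn_tfPotential_posPart_sq Ω₀).const_mul r
  have quad_int := hψ.integrableOn_quadEnergy ε Ω₀
  have quartic_int := hψ.integrableOn_density_sq.const_mul 2
  rw [chemicalPotential, quadEnergy, quarticEnergy, excess, ← integral_const_mul,
    ← integral_const_mul, ← integral_const_mul, ← integral_add excess_int tf_int,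
    ← integral_add quad_int quartic_int]
  refine integral_mono (quad_int.add quartic_int) (excess_int.add tf_int) fun x => ?_
  have split := congrArg (· * density ψ x) (posPart_sub_negPart (tfPotential Ω₀ x))
  have kin_term := mul_nonneg (sq_nonneg ε) (kin_nonneg (Ω₀ / ε) ψ x)
  have hole_term := mul_nonneg (negPart_nonneg (tfPotential Ω₀ x)) (density_nonneg ψ x)
  simp only [excessDensity]
  set u := density ψ x
  set ρ := (tfPotential Ω₀ x)⁺
  have square : 0 ≤ r⁻¹ * (u - ρ) ^ 2 - 2 * ((u - ρ) * ρ) + r * ρ ^ 2 := by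
    have : r⁻¹ * (u - ρ - r * ρ) ^ 2 = r⁻¹ * (u - ρ) ^ 2 - 2 * ((u - ρ) * ρ) + r * ρ ^ 2 := by
      field_simp
      ring
    rw [← this]
    positivity
  have inv_nonneg := (inv_pos.2 hr).le
  linarith [mul_nonneg inv_nonneg kin_term, mul_nonneg inv_nonneg hole_term]

end Excess

section RadialIntegrals

lemma setIntegral_ball_fun_norm {E F : Type*} [NormedAddCommGroup E] [NormedSpace ℝ E]
    [Nontrivial E] [FiniteDimensional ℝ E] [MeasurableSpace E] [BorelSpace E]
    [NormedAddCommGroup F] [NormedSpace ℝ F] (μ : Measure E) [μ.IsAddHaarMeasure] (f : ℝ → F)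
    {R : ℝ} (hR : 0 ≤ R) : ∫ x in Metric.ball 0 R, f ‖x‖ ∂μ =
      Module.finrank ℝ E • μ.real (Metric.ball 0 1) •
        ∫ r in 0..R, r ^ (Module.finrank ℝ E - 1) • f r := by
  have cutoff : ∫ x in Metric.ball 0 R, f ‖x‖ ∂μ = ∫ x, (Set.Iio R).indicator f ‖x‖ ∂μ := by
    rw [← integral_indicator measurableSet_ball]
    simp [Set.indicator]
  rw [cutoff, integral_fun_norm_addHaar, intervalIntegral.integral_of_le hR,
    integral_Ioc_eq_integral_Ioo, ← Set.Ioi_inter_Iio, ← setIntegral_indicator measurableSet_Iio]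
  simp only [Set.indicator_smul]

variable {Ω₀ : ℝ}

lemma setIntegral_tfPotential_posPart (h : 4 / √π < Ω₀) : ∫ x in B1, (tfPotential Ω₀ x)⁺ = 1 := by
  set s := R0 Ω₀ ^ 2
  have primitive (r : ℝ) : HasDerivAt (fun r : ℝ => Ω₀ ^ 2 / 32 * max (r ^ 2 - s) 0 ^ 2)
      (r * (Ω₀ ^ 2 / 8 * (r ^ 2 - s))⁺) r := by
    have outer := hasDerivAt_max_zero_pow 0 (r ^ 2 - s)
    have inner : HasDerivAt (fun r : ℝ => r ^ 2 - s) (2 * r) r := by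
      simpa using (hasDerivAt_pow 2 r).sub_const s
    refine ((outer.comp r inner).const_mul (Ω₀ ^ 2 / 32)).congr_deriv ?_
    have scale : (Ω₀ ^ 2 / 8 * (r ^ 2 - s))⁺ = Ω₀ ^ 2 / 8 * max (r ^ 2 - s) 0 := by
      rw [posPart_def, mul_max_of_nonneg _ _ (by positivity), mul_zero]
    rw [scale]
    norm_num
    ring
  have radial := setIntegral_ball_fun_norm (volume : Measure Pt)
    (fun r => (Ω₀ ^ 2 / 8 * (r ^ 2 - s))⁺) zero_le_one
  rw [finrank_euclideanSpace_fin, Measure.real, ← B1, volume_B1,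
    ENNReal.toReal_ofReal pi_pos.le] at radial
  simp only [tfPotential]
  rw [radial]
  simp only [Nat.add_one_sub_one, pow_one, smul_eq_mul]
  rw [intervalIntegral.integral_eq_sub_of_hasDerivAt (fun r _ => primitive r)
    (Continuous.intervalIntegrable (by simp only [posPart_def]; fun_prop) _ _)]
  have s_eq : s = 1 - 4 / (√π * Ω₀) := R0_sq h
  have gap : 0 < 4 / (√π * Ω₀) := div_pos four_pos
    (mul_pos (sqrt_pos.2 pi_pos) (pos_of_four_div_sqrt_pi_lt h))
  have Ω₀_pos := pos_of_four_div_sqrt_pi_lt h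
  rw [max_eq_left (by linarith), max_eq_right (by nlinarith [sq_nonneg (R0 Ω₀)]),
    show (1 : ℝ) ^ 2 - s = 4 / (√π * Ω₀) by rw [s_eq]; ring, div_pow, mul_pow,
    Real.sq_sqrt pi_pos.le]
  simp only [ne_eq, OfNat.ofNat_ne_zero, not_false_eq_true, zero_pow, mul_zero, sub_zero,
    nsmul_eq_mul, Nat.cast_ofNat]
  field_simp
  norm_num

lemma integral_mul_inv_sq_add {ε : ℝ} (hε : 0 < ε) (R : ℝ) :
    ∫ r in 0..R, r * (r ^ 2 + ε)⁻¹ = log ((R ^ 2 + ε) / ε) / 2 := by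
  have pos (r : ℝ) : 0 < r ^ 2 + ε := by positivity
  have primitive (r : ℝ) : HasDerivAt (fun r : ℝ => log (r ^ 2 + ε) / 2) (r * (r ^ 2 + ε)⁻¹) r := by
    have inner : HasDerivAt (fun r : ℝ => r ^ 2 + ε) (2 * r) r := by
      simpa using (hasDerivAt_pow 2 r).add_const ε
    refine ((inner.log (pos r).ne').div_const 2).congr_deriv ?_
    ring
  rw [intervalIntegral.integral_eq_sub_of_hasDerivAt (fun r _ => primitive r)
    (Continuous.intervalIntegrable
      (continuous_id.mul (Continuous.inv₀ (by fun_prop) fun r => (pos r).ne')) _ _),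
    log_div (pos R).ne' hε.ne']
  simp only [ne_eq, OfNat.ofNat_ne_zero, not_false_eq_true, zero_pow, zero_add]
  ring

lemma setIntegral_ball_inv_norm_sq_add {ε : ℝ} (hε : 0 < ε) {R : ℝ} (hR : 0 ≤ R) :
    ∫ ζ in Metric.ball (0 : ℂ) R, (‖ζ‖ ^ 2 + ε)⁻¹ = π * log ((R ^ 2 + ε) / ε) := by
  rw [setIntegral_ball_fun_norm volume (fun r => (r ^ 2 + ε)⁻¹) hR, Complex.finrank_real_complex]
  simp only [Nat.add_one_sub_one, pow_one, smul_eq_mul, integral_mul_inv_sq_add hε, Measure.real,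
    Complex.volume_ball]
  simp only [ENNReal.ofReal_one, one_pow, one_mul, ENNReal.coe_toReal, NNReal.coe_real_pi,
    nsmul_eq_mul, Nat.cast_ofNat]
  ring

end RadialIntegrals

section Averaging

variable {ε : ℝ}

lemma continuous_inv_norm_sq_add {X : Type*} [TopologicalSpace X] (hε : 0 < ε) {f : X → ℂ}
    (hf : Continuous f) : Continuous fun x => (‖f x‖ ^ 2 + ε)⁻¹ :=
  Continuous.inv₀ (by fun_prop) fun x => by positivity

lemma inv_norm_sq_add_le (hε : 0 < ε) (z : ℂ) : (‖z‖ ^ 2 + ε)⁻¹ ≤ ε⁻¹ :=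
  inv_anti₀ hε (by linarith [sq_nonneg ‖z‖])

lemma integrableOn_ball_inv_norm_sq_add (hε : 0 < ε) {f : ℂ → ℂ} (hf : Continuous f) (c : ℂ)
    (R : ℝ) : IntegrableOn (fun ζ => (‖f ζ‖ ^ 2 + ε)⁻¹) (Metric.ball c R) :=
  ((continuous_inv_norm_sq_add hε hf).continuousOn.integrableOn_compact
    (isCompact_closedBall c R)).mono_set Metric.ball_subset_closedBall

lemma setIntegral_ball_inv_norm_add_sq_le (hε : 0 < ε) {w : ℂ} {r : ℝ} (hw : ‖w‖ ≤ r) :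
    ∫ ζ in Metric.ball (0 : ℂ) 1, (‖w + ζ‖ ^ 2 + ε)⁻¹ ≤ π * log (((r + 1) ^ 2 + ε) / ε) := by
  have translate : ∫ ζ in Metric.ball (0 : ℂ) 1, (‖w + ζ‖ ^ 2 + ε)⁻¹ =
      ∫ ζ in Metric.ball w 1, (‖ζ‖ ^ 2 + ε)⁻¹ := by
    have := (measurePreserving_add_left volume w).setIntegral_preimage_emb
      (measurableEmbedding_addLeft w) (fun ζ => (‖ζ‖ ^ 2 + ε)⁻¹) (Metric.ball w 1)
    simpa using this
  rw [translate, ← setIntegral_ball_inv_norm_sq_add hε (by linarith [norm_nonneg w])]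
  refine setIntegral_mono_set (integrableOn_ball_inv_norm_sq_add hε continuous_id _ _)
    (Eventually.of_forall fun ζ => by positivity) ?_
  exact (Metric.ball_subset_ball' (by
    rw [dist_zero_right]
    linarith)).eventuallyLE

lemma setIntegral_ball_inv_norm_add_mul_sq_le (hε : 0 < ε) {a b : ℂ} (ha : ‖a‖ ≤ 1)
    (hab : 1 / 4 ≤ max ‖a‖ ‖b‖) : ∫ ζ in Metric.ball (0 : ℂ) 1, (‖a + b * ζ‖ ^ 2 + ε)⁻¹ ≤
      64 * π * (1 + log ((81 + ε) / ε)) := by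
  have log_nonneg : 0 ≤ log ((81 + ε) / ε) :=
    log_nonneg ((one_le_div hε).2 (by linarith))
  have integrable := integrableOn_ball_inv_norm_sq_add (f := fun ζ => a + b * ζ) hε
    (by fun_prop) 0 1
  rcases lt_or_ge ‖b‖ (1 / 8) with small | large
  · have a_ge : 1 / 4 ≤ ‖a‖ := (le_max_iff.1 hab).resolve_right (by linarith)
    have pointwise : ∀ ζ ∈ Metric.ball (0 : ℂ) 1, (‖a + b * ζ‖ ^ 2 + ε)⁻¹ ≤ 64 := by
      intro ζ hζ
      have product : ‖b * ζ‖ ≤ 1 / 8 := by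
        rw [norm_mul]
        nlinarith [mem_ball_zero_iff.1 hζ, norm_nonneg b]
      have lower := norm_sub_le (a + b * ζ) (b * ζ)
      rw [add_sub_cancel_right] at lower
      exact (inv_le_comm₀ (by positivity) (by norm_num)).2 (by nlinarith)
    refine (setIntegral_mono_on integrable (integrableOn_const measure_ball_lt_top.ne)
      measurableSet_ball pointwise).trans ?_
    simp only [integral_const, Measure.real, MeasurableSet.univ, Measure.restrict_apply,
      Set.univ_inter, Complex.volume_ball, ENNReal.ofReal_one, one_pow, one_mul, ENNReal.coe_toReal,
      NNReal.coe_real_pi, smul_eq_mul]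
    nlinarith [pi_pos]
  · have b_pos : 0 < ‖b‖ := by linarith
    have b_ne : b ≠ 0 := norm_pos_iff.1 b_pos
    have ratio : ‖a / b‖ ≤ 8 := by
      rw [norm_div, div_le_iff₀ b_pos]
      linarith
    have pointwise (ζ : ℂ) : (‖a + b * ζ‖ ^ 2 + ε)⁻¹ ≤ 64 * (‖a / b + ζ‖ ^ 2 + ε)⁻¹ := by
      have factor : ‖a + b * ζ‖ = ‖b‖ * ‖a / b + ζ‖ := by
        rw [← norm_mul]
        congr 1
        field_simp
      have b_sq : 1 / 64 ≤ ‖b‖ ^ 2 := by nlinarith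
      rw [factor, ← inv_inv (64 : ℝ), ← mul_inv, mul_pow]
      refine inv_anti₀ (by positivity) ?_
      nlinarith [sq_nonneg ‖a / b + ζ‖]
    refine (setIntegral_mono integrable ((integrableOn_ball_inv_norm_sq_add hε
      (by fun_prop) 0 1).const_mul 64) pointwise).trans ?_
    rw [integral_const_mul]
    have := setIntegral_ball_inv_norm_add_sq_le hε ratio
    norm_num only at this
    nlinarith [pi_pos]

lemma exists_integral_inv_norm_add_mul_sq_le {X : Type*} [MeasurableSpace X] {μ : Measure X}
    [IsFiniteMeasure μ] (hε : 0 < ε) {A B : X → ℂ} (hA : Measurable A) (hB : Measurable B)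
    (A_le : ∀ x, ‖A x‖ ≤ 1) (max_ge : ∀ x, 1 / 4 ≤ max ‖A x‖ ‖B x‖) :
    ∃ ζ : ℂ, ‖ζ‖ ≤ 1 ∧ ∫ x, (‖A x + B x * ζ‖ ^ 2 + ε)⁻¹ ∂μ ≤
      64 * μ.real Set.univ * (1 + log ((81 + ε) / ε)) := by
  have volume_disc : volume.real (Metric.ball (0 : ℂ) 1) = π := by simp [Measure.real]
  have finite : IsFiniteMeasure (volume.restrict (Metric.ball (0 : ℂ) 1)) :=
    ⟨by simp⟩
  have integrable : Integrable (fun p : ℂ × X => (‖A p.2 + B p.2 * p.1‖ ^ 2 + ε)⁻¹)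
      ((volume.restrict (Metric.ball 0 1)).prod μ) := by
    refine Integrable.of_bound (by fun_prop) ε⁻¹ (Eventually.of_forall fun p => ?_)
    rw [Real.norm_of_nonneg (by positivity)]
    exact inv_norm_sq_add_le hε _
  have averaged : IntegrableOn (fun ζ => ∫ x, (‖A x + B x * ζ‖ ^ 2 + ε)⁻¹ ∂μ)
      (Metric.ball 0 1) := integrable.integral_prod_left
  have mean_le : ∫ ζ in Metric.ball (0 : ℂ) 1, ∫ x, (‖A x + B x * ζ‖ ^ 2 + ε)⁻¹ ∂μ ≤
      ∫ _, 64 * π * (1 + log ((81 + ε) / ε)) ∂μ := by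
    rw [integral_integral_swap integrable]
    exact integral_mono integrable.integral_prod_right (integrable_const _) fun x =>
      setIntegral_ball_inv_norm_add_mul_sq_le hε (A_le x) (max_ge x)
  obtain ⟨ζ, hζ, below⟩ := exists_le_setAverage
    (Metric.measure_ball_pos _ _ one_pos).ne' measure_ball_lt_top.ne averaged
  refine ⟨ζ, (mem_ball_zero_iff.1 hζ).le, below.trans ?_⟩
  rw [setAverage_eq, volume_disc, smul_eq_mul, inv_mul_le_iff₀ pi_pos]
  rw [integral_const, smul_eq_mul] at mean_le
  linarith

end Averaging

section Trial

variable {ε Ω Ω₀ : ℝ} {v : Pt → ℂ} {g : Pt → ℝ} {x : Pt}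

lemma gradient_comp {G : ℝ → ℝ} {G' : ℝ} (hG : HasDerivAt G G' (g x))
    (hg : DifferentiableAt ℝ g x) : ∇ (fun y => G (g y)) x = G' • ∇ g x := by
  refine HasGradientAt.gradient (hasGradientAt_iff_hasFDerivAt.2
    ((hG.comp_hasFDerivAt x hg.hasFDerivAt).congr_fderiv ?_))
  ext v
  simp

lemma kin_smul_le (Ω : ℝ) (hv : DifferentiableAt ℝ v x) (hg : DifferentiableAt ℝ g x) :
    kin Ω (fun y => g y • v y) x ≤ 2 * (g x ^ 2 * kin Ω v x + ‖∇ g x‖ ^ 2 * density v x) := by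
  simp only [kin, covDeriv_smul Ω hv hg]
  refine (Finset.sum_le_sum fun i _ => norm_add_sq_le_two_mul _ _).trans_eq ?_
  simp only [density, EuclideanSpace.norm_sq_eq (∇ g x), Fin.sum_univ_two, norm_smul,
    gradient_apply, mul_pow, Real.norm_eq_abs, sq_abs]
  ring

/-- The field `v / √(|v|² + ε)`, a smooth substitute for the phase `v / |v|`. -/
def softPhase (ε : ℝ) (v : Pt → ℂ) (x : Pt) : ℂ := (√(density v x + ε))⁻¹ • v x

lemma density_add_pos (hε : 0 < ε) (v : Pt → ℂ) (x : Pt) : 0 < density v x + ε :=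
  add_pos_of_nonneg_of_pos (density_nonneg v x) hε

lemma mul_inv_density_add_le_one (hε : 0 < ε) (v : Pt → ℂ) (x : Pt) :
    ε * (density v x + ε)⁻¹ ≤ 1 :=
  mul_inv_le_one_of_le₀ (by linarith [density_nonneg v x]) (density_add_pos hε v x).le

lemma density_softPhase (hε : 0 < ε) (v : Pt → ℂ) (x : Pt) :
    density (softPhase ε v) x = 1 - ε * (density v x + ε)⁻¹ := by
  have pos := density_add_pos hε v x
  unfold softPhase
  rw [density_smul, inv_pow, Real.sq_sqrt pos.le]
  field_simp
  ring

lemma contDiff_density (hv : ContDiff ℝ 1 v) : ContDiff ℝ 1 (density v) := hv.norm_sq ℝ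

lemma contDiff_inv_sqrt_density_add (hε : 0 < ε) (hv : ContDiff ℝ 1 v) :
    ContDiff ℝ 1 fun x => (√(density v x + ε))⁻¹ :=
  (((contDiff_density hv).add contDiff_const).sqrt fun x => (density_add_pos hε v x).ne').inv
    fun x => (sqrt_pos.2 (density_add_pos hε v x)).ne'

lemma contDiff_softPhase (hε : 0 < ε) (hv : ContDiff ℝ 1 v) : ContDiff ℝ 1 (softPhase ε v) :=
  (contDiff_inv_sqrt_density_add hε hv).smul hv

lemma hasDerivAt_inv_sqrt_add {t : ℝ} (ht : 0 < t + ε) :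
    HasDerivAt (fun t => (√(t + ε))⁻¹) (-(2 * √(t + ε) ^ 3)⁻¹) t := by
  refine ((((hasDerivAt_id t).add_const ε).sqrt ht.ne').inv (sqrt_pos.2 ht).ne').congr_deriv ?_
  have := sqrt_pos.2 ht
  simp only [id]
  field_simp

lemma kin_softPhase_le (hε : 0 < ε) (Ω : ℝ) (hv : ContDiff ℝ 1 v) (x : Pt) :
    kin Ω (softPhase ε v) x ≤ 4 * ((density v x + ε)⁻¹ * kin Ω v x) := by
  have pos := density_add_pos hε v x
  have v_diff := (hv.differentiable one_ne_zero).differentiableAt (x := x)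
  have amplitude_diff := ((contDiff_inv_sqrt_density_add hε hv).differentiable
    one_ne_zero).differentiableAt (x := x)
  have density_diff := ((contDiff_density hv).differentiable one_ne_zero).differentiableAt (x := x)
  have gradient_sq : ‖∇ (fun y => (√(density v y + ε))⁻¹) x‖ ^ 2 * density v x ≤
      (density v x + ε)⁻¹ * kin Ω v x := by
    have fraction_le : density v x * (density v x + ε)⁻¹ ≤ 1 :=
      mul_inv_le_one_of_le₀ (by linarith) pos.le
    have fraction_nonneg : 0 ≤ density v x * (density v x + ε)⁻¹ :=
      mul_nonneg (density_nonneg v x) (inv_pos.2 pos).le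
    have bound := mul_le_mul_of_nonneg_left (norm_gradient_density_sq_le Ω v_diff)
      (mul_nonneg (density_nonneg v x) (pow_pos (inv_pos.2 pos) 3).le)
    have rest_nonneg : 0 ≤ (density v x + ε)⁻¹ * kin Ω v x :=
      mul_nonneg (inv_pos.2 pos).le (kin_nonneg Ω v x)
    rw [gradient_comp (hasDerivAt_inv_sqrt_add pos) density_diff, norm_smul, mul_pow, norm_neg,
      norm_inv, inv_pow, norm_mul, norm_pow, mul_pow, ← pow_mul, mul_comm 3 2, pow_mul,
      Real.norm_eq_abs, sq_abs, Real.norm_eq_abs, sq_abs, Real.sq_sqrt pos.le]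
    calc ((2 : ℝ) ^ 2 * (density v x + ε) ^ 3)⁻¹ * ‖∇ (density v) x‖ ^ 2 * density v x
        = density v x * (density v x + ε)⁻¹ ^ 3 * ‖∇ (density v) x‖ ^ 2 / 4 := by
          rw [mul_inv, inv_pow]
          ring
      _ ≤ (density v x * (density v x + ε)⁻¹) ^ 2 * ((density v x + ε)⁻¹ * kin Ω v x) := by
          linarith
      _ ≤ (density v x + ε)⁻¹ * kin Ω v x :=
          mul_le_of_le_one_left rest_nonneg (pow_le_one₀ fraction_nonneg fraction_le)
  have split := kin_smul_le Ω v_diff amplitude_diff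
  rw [inv_pow, Real.sq_sqrt pos.le] at split
  unfold softPhase
  linarith

/-- A smooth approximation of the positive part that is bounded below by `ε`. -/
def softPosPart (ε t : ℝ) : ℝ := √(t⁺ ^ 2 + ε ^ 2)

lemma le_softPosPart (ε t : ℝ) : ε ≤ softPosPart ε t :=
  le_sqrt_of_sq_le (by nlinarith [sq_nonneg t⁺])

lemma posPart_le_softPosPart (ε t : ℝ) : t⁺ ≤ softPosPart ε t :=
  le_sqrt_of_sq_le (by nlinarith [sq_nonneg ε])

lemma softPosPart_le (hε : 0 ≤ ε) (t : ℝ) : softPosPart ε t ≤ t⁺ + ε :=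
  sqrt_le_iff.2 ⟨add_nonneg (posPart_nonneg t) hε, by nlinarith [mul_nonneg (posPart_nonneg t) hε]⟩

lemma negPart_mul_softPosPart (hε : 0 ≤ ε) (t : ℝ) : t⁻ * softPosPart ε t = t⁻ * ε := by
  rcases le_total 0 t with nonneg | nonpos
  · rw [negPart_eq_zero.2 nonneg, zero_mul, zero_mul]
  · rw [softPosPart, posPart_eq_zero.2 nonpos, zero_pow two_ne_zero, zero_add, sqrt_sq hε]

lemma contDiff_sqrt_softPosPart (hε : 0 < ε) : ContDiff ℝ 1 fun t => √(softPosPart ε t) :=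
  (((contDiff_max_zero_pow 0).add contDiff_const).sqrt fun _ =>
    (add_pos_of_nonneg_of_pos (sq_nonneg _) (pow_pos hε 2)).ne').sqrt
      fun _ => (hε.trans_le (le_softPosPart ε _)).ne'

lemma deriv_sqrt_softPosPart_sq_le (hε : 0 < ε) (t : ℝ) :
    deriv (fun t => √(softPosPart ε t)) t ^ 2 ≤ (4 * ε)⁻¹ := by
  have pos := hε.trans_le (le_softPosPart ε t)
  have derivative : HasDerivAt (fun t => √(softPosPart ε t))
      (t⁺ / (2 * softPosPart ε t * √(softPosPart ε t))) t := by
    refine ((((hasDerivAt_max_zero_pow 0 t).add_const (ε ^ 2)).sqrt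
      (add_pos_of_nonneg_of_pos (sq_nonneg _) (pow_pos hε 2)).ne').sqrt pos.ne').congr_deriv ?_
    change _ / (2 * softPosPart ε t) / (2 * √(softPosPart ε t)) = _
    simp only [posPart_def]
    field_simp
    norm_num
  rw [derivative.deriv, div_pow, mul_pow, Real.sq_sqrt pos.le, mul_pow, inv_eq_one_div,
    div_le_div_iff₀ (by positivity) (by positivity)]
  have square_le : t⁺ ^ 2 ≤ softPosPart ε t ^ 2 :=
    pow_le_pow_left₀ (posPart_nonneg t) (posPart_le_softPosPart ε t) 2
  have := mul_le_mul square_le (le_softPosPart ε t) hε.le (sq_nonneg _)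
  linarith

lemma negPart_tfPotential_le (h : 4 / √π < Ω₀) (x : Pt) : (tfPotential Ω₀ x)⁻ ≤ Ω₀ ^ 2 / 8 := by
  have R0_sq_le : R0 Ω₀ ^ 2 ≤ 1 := pow_le_one₀ (R0_pos h).le (R0_lt_one h).le
  rw [negPart_def, tfPotential]
  refine sup_le ?_ (by positivity)
  nlinarith [mul_nonneg (sq_nonneg Ω₀) (sq_nonneg ‖x‖), sq_nonneg Ω₀]

lemma contDiff_tfPotential (Ω₀ : ℝ) : ContDiff ℝ 1 (tfPotential Ω₀) :=
  contDiff_const.mul ((contDiff_norm_sq ℝ).sub contDiff_const)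

lemma gradient_tfPotential (Ω₀ : ℝ) (x : Pt) : ∇ (tfPotential Ω₀) x = (Ω₀ ^ 2 / 4) • x := by
  have rewritten : tfPotential Ω₀ = fun y => -(Ω₀ ^ 2 / 8) * (R0 Ω₀ ^ 2 - ‖y - 0‖ ^ 2) := by
    funext y
    rw [tfPotential, sub_zero]
    ring
  rw [rewritten, (hasGradientAt_comp_sub_norm_sq (hasDerivAt_const_mul _)).gradient, sub_zero]
  congr 1
  ring

/-- The trial field with the phase of `v` and, away from the zeros of `v`, approximately the
Thomas–Fermi density. -/
def trial (ε Ω₀ : ℝ) (v : Pt → ℂ) (x : Pt) : ℂ :=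
  √(softPosPart ε (tfPotential Ω₀ x)) • softPhase ε v x

lemma contDiff_sqrt_softPosPart_tfPotential (hε : 0 < ε) (Ω₀ : ℝ) :
    ContDiff ℝ 1 fun x => √(softPosPart ε (tfPotential Ω₀ x)) :=
  (contDiff_sqrt_softPosPart hε).comp (contDiff_tfPotential Ω₀)

lemma contDiff_trial (hε : 0 < ε) (Ω₀ : ℝ) (hv : ContDiff ℝ 1 v) :
    ContDiff ℝ 1 (trial ε Ω₀ v) :=
  (contDiff_sqrt_softPosPart_tfPotential hε Ω₀).smul (contDiff_softPhase hε hv)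

lemma norm_gradient_amplitude_sq_le (hε : 0 < ε) (Ω₀ : ℝ) (hx : x ∈ B1) :
    ‖∇ (fun y => √(softPosPart ε (tfPotential Ω₀ y))) x‖ ^ 2 ≤ Ω₀ ^ 4 / (64 * ε) := by
  have outer := ((contDiff_sqrt_softPosPart hε).differentiable one_ne_zero
    (tfPotential Ω₀ x)).hasDerivAt
  rw [gradient_comp outer ((contDiff_tfPotential Ω₀).differentiable one_ne_zero x),
    gradient_tfPotential, norm_smul, norm_smul, mul_pow, mul_pow, Real.norm_eq_abs, sq_abs,
    Real.norm_eq_abs, sq_abs]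
  have norm_sq_le : ‖x‖ ^ 2 ≤ 1 := pow_le_one₀ (norm_nonneg x) (norm_lt_one_of_mem_B1 hx).le
  calc _ ≤ (4 * ε)⁻¹ * ((Ω₀ ^ 2 / 4) ^ 2 * 1) := by
        gcongr
        exact deriv_sqrt_softPosPart_sq_le hε _
    _ = Ω₀ ^ 4 / (64 * ε) := by
        field_simp
        ring

lemma density_trial (hε : 0 < ε) (Ω₀ : ℝ) (v : Pt → ℂ) (x : Pt) : density (trial ε Ω₀ v) x =
    softPosPart ε (tfPotential Ω₀ x) * (1 - ε * (density v x + ε)⁻¹) := by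
  unfold trial
  rw [density_smul, Real.sq_sqrt (hε.le.trans (le_softPosPart ε _)), density_softPhase hε]

lemma kin_trial_le (hε : 0 < ε) (Ω Ω₀ : ℝ) (hv : ContDiff ℝ 1 v) (hx : x ∈ B1) :
    kin Ω (trial ε Ω₀ v) x ≤
      8 * softPosPart ε (tfPotential Ω₀ x) * ((density v x + ε)⁻¹ * kin Ω v x)
        + Ω₀ ^ 4 / (32 * ε) := by
  have amplitude_nonneg := hε.le.trans (le_softPosPart ε (tfPotential Ω₀ x))
  have split := kin_smul_le Ω ((contDiff_softPhase hε hv).differentiable one_ne_zero x)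
    ((contDiff_sqrt_softPosPart_tfPotential hε Ω₀).differentiable one_ne_zero x)
  rw [Real.sq_sqrt amplitude_nonneg] at split
  have phase := mul_le_mul_of_nonneg_left (kin_softPhase_le hε Ω hv x) amplitude_nonneg
  have density_le : density (softPhase ε v) x ≤ 1 := by
    rw [density_softPhase hε]
    linarith [mul_pos hε (inv_pos.2 (density_add_pos hε v x))]
  have amplitude := mul_le_mul (norm_gradient_amplitude_sq_le hε Ω₀ hx) density_le
    (density_nonneg _ x) (by positivity)
  have halve : Ω₀ ^ 4 / (32 * ε) = 2 * (Ω₀ ^ 4 / (64 * ε)) := by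
    field_simp
    ring
  unfold trial
  linarith

lemma softPosPart_tfPotential_le (hε : 0 ≤ ε) (hε1 : ε ≤ 1) (hx : x ∈ B1) :
    softPosPart ε (tfPotential Ω₀ x) ≤ Ω₀ ^ 2 / 8 + 1 :=
  (softPosPart_le hε _).trans (add_le_add (sup_le (tfPotential_le hx) (by positivity)) hε1)

lemma sq_mul_kin_trial_le (hε : 0 < ε) (hε1 : ε ≤ 1) (hv : ContDiff ℝ 1 v) {Ω A : ℝ}
    (kin_le : kin Ω v x ≤ A / ε) (hx : x ∈ B1) :
    ε ^ 2 * kin Ω (trial ε Ω₀ v) x ≤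
      8 * (Ω₀ ^ 2 / 8 + 1) * A * ε * (density v x + ε)⁻¹ + Ω₀ ^ 4 / 32 * ε := by
  set σ := (density v x + ε)⁻¹
  have σ_nonneg : 0 ≤ σ := (inv_pos.2 (density_add_pos hε v x)).le
  have main := mul_le_mul (softPosPart_tfPotential_le (Ω₀ := Ω₀) hε.le hε1 hx)
    (mul_le_mul_of_nonneg_left kin_le σ_nonneg) (mul_nonneg σ_nonneg (kin_nonneg _ v x))
    (by positivity)
  calc _ ≤ ε ^ 2 * (8 * ((Ω₀ ^ 2 / 8 + 1) * (σ * (A / ε))) + Ω₀ ^ 4 / (32 * ε)) := by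
        refine mul_le_mul_of_nonneg_left ?_ (sq_nonneg ε)
        linarith [kin_trial_le hε Ω Ω₀ hv hx]
    _ = _ := by
        field_simp

lemma density_trial_sub_posPart_sq_le (hε : 0 < ε) (hε1 : ε ≤ 1) (v : Pt → ℂ) (hx : x ∈ B1) :
    (density (trial ε Ω₀ v) x - (tfPotential Ω₀ x)⁺) ^ 2 ≤
      2 * ε + 2 * (Ω₀ ^ 2 / 8 + 1) ^ 2 * ε * (density v x + ε)⁻¹ := by
  rw [density_trial hε]
  set W := softPosPart ε (tfPotential Ω₀ x)
  set σ := (density v x + ε)⁻¹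
  have σ_pos : 0 < σ := inv_pos.2 (density_add_pos hε v x)
  have approximation : (W - (tfPotential Ω₀ x)⁺) ^ 2 ≤ ε ^ 2 :=
    pow_le_pow_left₀ (sub_nonneg.2 (posPart_le_softPosPart ε _))
      (sub_le_iff_le_add'.2 (softPosPart_le hε.le _)) 2
  have vortices : (W * (ε * σ)) ^ 2 ≤ (Ω₀ ^ 2 / 8 + 1) ^ 2 * (ε * σ) := by
    have W_nonneg : 0 ≤ W := hε.le.trans (le_softPosPart ε _)
    rw [mul_pow]
    refine mul_le_mul (pow_le_pow_left₀ W_nonneg (softPosPart_tfPotential_le hε.le hε1 hx) 2)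
      ?_ (sq_nonneg _) (sq_nonneg _)
    exact pow_le_of_le_one (by positivity) (mul_inv_density_add_le_one hε v x) two_ne_zero
  nlinarith [sq_nonneg (W - (tfPotential Ω₀ x)⁺ + W * (ε * σ))]

lemma negPart_mul_density_trial_le (h : 4 / √π < Ω₀) (hε : 0 < ε) (v : Pt → ℂ) (x : Pt) :
    (tfPotential Ω₀ x)⁻ * density (trial ε Ω₀ v) x ≤ Ω₀ ^ 2 / 8 * ε := by
  have fraction_nonneg := mul_pos hε (inv_pos.2 (density_add_pos hε v x))
  rw [density_trial hε, ← mul_assoc, negPart_mul_softPosPart hε.le]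
  exact (mul_le_of_le_one_right (mul_nonneg (negPart_nonneg _) hε.le) (by linarith)).trans
    (mul_le_mul_of_nonneg_right (negPart_tfPotential_le h x) hε.le)

lemma excessDensity_trial_le (h : 4 / √π < Ω₀) (hε : 0 < ε) (hε1 : ε ≤ 1) (hv : ContDiff ℝ 1 v)
    {A : ℝ} (kin_le : kin (Ω₀ / ε) v x ≤ A / ε) (hx : x ∈ B1) :
    excessDensity ε Ω₀ (trial ε Ω₀ v) x ≤ (Ω₀ ^ 4 / 32 + 2 + Ω₀ ^ 2 / 4) * ε +
      (8 * (Ω₀ ^ 2 / 8 + 1) * A + 2 * (Ω₀ ^ 2 / 8 + 1) ^ 2) * ε * (density v x + ε)⁻¹ := by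
  rw [excessDensity]
  linarith [sq_mul_kin_trial_le (Ω₀ := Ω₀) hε hε1 hv kin_le hx,
    density_trial_sub_posPart_sq_le (Ω₀ := Ω₀) hε hε1 v hx, negPart_mul_density_trial_le h hε v x]

lemma integrableOn_inv_density_add (hε : 0 < ε) (hv : ContDiff ℝ 1 v) :
    IntegrableOn (fun x => (density v x + ε)⁻¹) B1 :=
  integrableOn_of_continuous (((contDiff_density hv).continuous.add continuous_const).inv₀
    fun x => (density_add_pos hε v x).ne')

lemma excess_trial_le (h : 4 / √π < Ω₀) (hε : 0 < ε) (hε1 : ε ≤ 1) (hv : ContDiff ℝ 1 v) {A : ℝ}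
    (kin_le : ∀ x ∈ B1, kin (Ω₀ / ε) v x ≤ A / ε) :
    excess ε Ω₀ (trial ε Ω₀ v) ≤ π * ((Ω₀ ^ 4 / 32 + 2 + Ω₀ ^ 2 / 4) * ε) +
      (8 * (Ω₀ ^ 2 / 8 + 1) * A + 2 * (Ω₀ ^ 2 / 8 + 1) ^ 2) * ε *
        ∫ x in B1, (density v x + ε)⁻¹ := by
  have σ_int := (integrableOn_inv_density_add hε hv).const_mul
    ((8 * (Ω₀ ^ 2 / 8 + 1) * A + 2 * (Ω₀ ^ 2 / 8 + 1) ^ 2) * ε)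
  rw [← setIntegral_const_B1, ← integral_const_mul,
    ← integral_add (integrable_const _) σ_int]
  exact setIntegral_mono_on
    ((FiniteEnergy.of_contDiff (contDiff_trial hε Ω₀ hv)).integrableOn_excessDensity ε Ω₀)
    ((integrable_const _).add σ_int) measurableSet_B1
    fun x hx => excessDensity_trial_le h hε hε1 hv (kin_le x hx) hx

end Trial

section Strips

variable {Ω c : ℝ} {ψ φ : Pt → ℂ} {x : Pt}

lemma covDeriv_congr (h : ψ =ᶠ[𝓝 x] φ) (Ω : ℝ) : covDeriv Ω ψ x = covDeriv Ω φ x := by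
  funext v
  rw [covDeriv, covDeriv, h.fderiv_eq, h.eq_of_nhds]

lemma kin_congr (h : ψ =ᶠ[𝓝 x] φ) (Ω : ℝ) : kin Ω ψ x = kin Ω φ x := by
  simp only [kin, covDeriv_congr h]

lemma covDeriv_add_mul_const (Ω : ℝ) (hψ : DifferentiableAt ℝ ψ x) (hφ : DifferentiableAt ℝ φ x)
    (ζ : ℂ) (v : Pt) : covDeriv Ω (fun y => ψ y + φ y * ζ) x v =
      covDeriv Ω ψ x v + covDeriv Ω φ x v * ζ := by
  simp only [covDeriv, (hψ.hasFDerivAt.fun_add (hφ.hasFDerivAt.mul_const ζ)).fderiv]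
  simp only [add_apply, smul_apply, smul_eq_mul, Complex.real_smul, Complex.ofReal_mul,
    Complex.ofReal_div, Complex.ofReal_ofNat, Complex.ofReal_sub]
  ring

lemma kin_add_mul_const_le (Ω : ℝ) (hψ : DifferentiableAt ℝ ψ x) (hφ : DifferentiableAt ℝ φ x)
    {ζ : ℂ} (hζ : ‖ζ‖ ≤ 1) :
    kin Ω (fun y => ψ y + φ y * ζ) x ≤ 2 * (kin Ω ψ x + kin Ω φ x) := by
  simp only [kin, covDeriv_add_mul_const Ω hψ hφ]
  rw [← Finset.sum_add_distrib, Finset.mul_sum]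
  refine Finset.sum_le_sum fun i _ => (norm_add_sq_le_two_mul _ _).trans ?_
  rw [norm_mul, mul_pow]
  have := mul_le_of_le_one_right (sq_nonneg ‖covDeriv Ω φ x (EuclideanSpace.single i 1)‖)
    (pow_le_one₀ (n := 2) (norm_nonneg ζ) hζ)
  linarith

lemma covDeriv_exp_mul_I (Ω : ℝ) {θ : Pt → ℝ} (hθ : DifferentiableAt ℝ θ x) (v : Pt) :
    covDeriv Ω (fun y => Complex.exp (θ y * Complex.I)) x v =
      (fderiv ℝ θ x v - Ω / 2 * (x 0 * v 1 - x 1 * v 0)) •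
        (Complex.I * Complex.exp (θ x * Complex.I)) := by
  have derivative : HasFDerivAt (fun y => Complex.exp (θ y * Complex.I)) _ x :=
    ((Complex.ofRealCLM.hasFDerivAt.comp x hθ.hasFDerivAt).mul_const Complex.I).cexp
  rw [covDeriv, derivative.fderiv]
  simp only [Function.comp_apply, Complex.ofRealCLM_apply, smul_apply,
    ContinuousLinearMap.comp_apply, smul_eq_mul, Complex.real_smul, Complex.ofReal_mul,
    Complex.ofReal_div, Complex.ofReal_ofNat, Complex.ofReal_sub]
  ring

/-- The phase whose gradient differs from the magnetic potential by `Ω (c - x₁)` in the second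
coordinate: the lowest Landau level in the gauge centred on the line `x₁ = c`. -/
def landauPhase (Ω c : ℝ) (x : Pt) : ℝ := Ω * (x 1 * (c - 1 / 2 * x 0))

lemma contDiff_landauPhase (Ω c : ℝ) : ContDiff ℝ 1 (landauPhase Ω c) := by
  unfold landauPhase
  fun_prop

lemma fderiv_landauPhase (Ω c : ℝ) (x v : Pt) :
    fderiv ℝ (landauPhase Ω c) x v = Ω * (v 1 * (c - 1 / 2 * x 0) - 1 / 2 * (x 1 * v 0)) := by
  have coordinate (i : Fin 2) : HasFDerivAt (fun y : Pt => y i)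
      (EuclideanSpace.proj i : Pt →L[ℝ] ℝ) x := (EuclideanSpace.proj i : Pt →L[ℝ] ℝ).hasFDerivAt
  have derivative : HasFDerivAt (landauPhase Ω c) _ x :=
    ((coordinate 1).mul (((coordinate 0).const_mul (1 / 2)).const_sub c)).const_mul Ω
  rw [derivative.fderiv]
  simp only [one_div, smul_neg, smul_add, add_apply, neg_apply, smul_apply, PiLp.proj_apply,
    smul_eq_mul]
  ring

lemma kin_landauPhase (Ω c : ℝ) (x : Pt) :
    kin Ω (fun y => Complex.exp (landauPhase Ω c y * Complex.I)) x = Ω ^ 2 * (x 0 - c) ^ 2 := by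
  have differentiable := (contDiff_landauPhase Ω c).differentiable one_ne_zero x
  simp only [kin, Fin.sum_univ_two, covDeriv_exp_mul_I Ω differentiable, fderiv_landauPhase,
    norm_smul, norm_mul, Complex.norm_I, Complex.norm_exp_ofReal_mul_I, Real.norm_eq_abs, mul_one,
    sq_abs]
  simp only [ne_eq, one_ne_zero, not_false_eq_true, PiLp.single_eq_of_ne, one_div, zero_mul,
    PiLp.single_eq_same, mul_one, zero_sub, mul_neg, mul_zero, sub_neg_eq_add, one_mul, zero_ne_one,
    sub_zero]
  ring

/-- A bump on `|t| ≤ 1 / √8`, so that translates by half integers cover the line. -/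
def stripProfile (t : ℝ) : ℝ := max (1 - 8 * t ^ 2) 0 ^ 2

lemma stripProfile_nonneg (t : ℝ) : 0 ≤ stripProfile t := sq_nonneg _

lemma stripProfile_le_one (t : ℝ) : stripProfile t ≤ 1 :=
  pow_le_one₀ (le_max_right _ _) (max_le (by nlinarith [sq_nonneg t]) zero_le_one)

lemma stripProfile_eq_zero {t : ℝ} (ht : 3 / 8 ≤ |t|) : stripProfile t = 0 := by
  rw [stripProfile, max_eq_right (by nlinarith [sq_abs t]), zero_pow two_ne_zero]

lemma one_fourth_le_stripProfile {t : ℝ} (ht : |t| ≤ 1 / 4) : 1 / 4 ≤ stripProfile t := by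
  have half_le : 1 / 2 ≤ max (1 - 8 * t ^ 2) 0 :=
    le_max_of_le_left (by nlinarith [sq_abs t, abs_nonneg t])
  calc (1 / 4 : ℝ) = (1 / 2) ^ 2 := by norm_num
    _ ≤ stripProfile t := pow_le_pow_left₀ (by norm_num) half_le 2

lemma contDiff_stripProfile : ContDiff ℝ 1 stripProfile :=
  (contDiff_max_zero_pow 0).comp (f := fun t : ℝ => 1 - 8 * t ^ 2) (by fun_prop)

lemma deriv_stripProfile_sq_le (t : ℝ) : deriv stripProfile t ^ 2 ≤ 128 := by
  have inner : HasDerivAt (fun t : ℝ => 1 - 8 * t ^ 2) (-(8 * (2 * t))) t := by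
    simpa using ((hasDerivAt_pow 2 t).const_mul 8).const_sub 1
  have derivative : HasDerivAt stripProfile _ t := (hasDerivAt_max_zero_pow 0 _).comp t inner
  rw [derivative.deriv]
  rcases le_total (1 - 8 * t ^ 2) 0 with outside | inside
  · simp [outside]
  · rw [max_eq_left inside]
    norm_num
    nlinarith [mul_nonneg (sq_nonneg t) inside, mul_nonneg (mul_nonneg (sq_nonneg t) inside) inside]

/-- A strip of width of order `Ω^(-1/2)` around `x₁ = c` carrying the phase `landauPhase`. -/
def landauStrip (Ω c : ℝ) (x : Pt) : ℂ :=
  stripProfile (√Ω * (x 0 - c)) • Complex.exp (landauPhase Ω c x * Complex.I)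

lemma norm_landauStrip (Ω c : ℝ) (x : Pt) :
    ‖landauStrip Ω c x‖ = stripProfile (√Ω * (x 0 - c)) := by
  rw [landauStrip, norm_smul, Complex.norm_exp_ofReal_mul_I, mul_one,
    Real.norm_of_nonneg (stripProfile_nonneg _)]

lemma contDiff_exp_landauPhase (Ω c : ℝ) :
    ContDiff ℝ 1 fun x => Complex.exp (landauPhase Ω c x * Complex.I) :=
  ((Complex.ofRealCLM.contDiff.comp (contDiff_landauPhase Ω c)).mul contDiff_const).cexp

lemma contDiff_stripProfile_comp (Ω c : ℝ) :
    ContDiff ℝ 1 fun x : Pt => stripProfile (√Ω * (x 0 - c)) :=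
  contDiff_stripProfile.comp (by fun_prop)

lemma contDiff_landauStrip (Ω c : ℝ) : ContDiff ℝ 1 (landauStrip Ω c) :=
  (contDiff_stripProfile_comp Ω c).smul (contDiff_exp_landauPhase Ω c)

lemma norm_gradient_stripProfile_sq_le (hΩ : 0 ≤ Ω) (c : ℝ) (x : Pt) :
    ‖∇ (fun y : Pt => stripProfile (√Ω * (y 0 - c))) x‖ ^ 2 ≤ 128 * Ω := by
  have inner : HasFDerivAt (fun y : Pt => √Ω * (y 0 - c)) _ x :=
    ((EuclideanSpace.proj 0 : Pt →L[ℝ] ℝ).hasFDerivAt.sub_const c).const_mul (√Ω)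
  have inner_gradient : ‖∇ (fun y : Pt => √Ω * (y 0 - c)) x‖ ^ 2 = Ω := by
    rw [EuclideanSpace.norm_sq_eq, Fin.sum_univ_two, gradient_apply, gradient_apply, inner.fderiv]
    simp [Real.sq_sqrt hΩ]
  rw [gradient_comp (contDiff_stripProfile.differentiable one_ne_zero _).hasDerivAt
    inner.differentiableAt, norm_smul, mul_pow, inner_gradient, Real.norm_eq_abs, sq_abs]
  exact mul_le_mul_of_nonneg_right (deriv_stripProfile_sq_le _) hΩ

lemma kin_landauStrip_le (hΩ : 0 ≤ Ω) (c : ℝ) (x : Pt) : kin Ω (landauStrip Ω c) x ≤ 257 * Ω := by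
  have split := kin_smul_le Ω ((contDiff_exp_landauPhase Ω c).differentiable one_ne_zero x)
    ((contDiff_stripProfile_comp Ω c).differentiable one_ne_zero x)
  rw [kin_landauPhase, density, Complex.norm_exp_ofReal_mul_I, one_pow, mul_one] at split
  have rescaled : Ω ^ 2 * (x 0 - c) ^ 2 = Ω * (√Ω * (x 0 - c)) ^ 2 := by
    rw [mul_pow, Real.sq_sqrt hΩ]
    ring
  have confined : stripProfile (√Ω * (x 0 - c)) ^ 2 * (Ω * (√Ω * (x 0 - c)) ^ 2) ≤ Ω / 2 := by
    set t := √Ω * (x 0 - c)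
    rcases le_total (3 / 8) |t| with outside | inside
    · rw [stripProfile_eq_zero outside]
      linarith
    · have profile_sq_le : stripProfile t ^ 2 ≤ 1 :=
        pow_le_one₀ (stripProfile_nonneg t) (stripProfile_le_one t)
      have t_sq_le : t ^ 2 ≤ 1 / 2 := by nlinarith [sq_abs t, abs_nonneg t]
      calc _ ≤ 1 * (Ω * (1 / 2)) := by gcongr
        _ = Ω / 2 := by ring
  rw [rescaled] at split
  unfold landauStrip
  linarith [norm_gradient_stripProfile_sq_le hΩ c x]

/-- The union of the strips around `x₁ = (k + p) / √Ω` for integers `k`. -/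
def landauStrips (Ω p : ℝ) (x : Pt) : ℂ := landauStrip Ω ((round (√Ω * x 0 - p) + p) / √Ω) x

lemma norm_landauStrips (hΩ : 0 < Ω) (p : ℝ) (x : Pt) : ‖landauStrips Ω p x‖ =
    stripProfile (√Ω * x 0 - p - round (√Ω * x 0 - p)) := by
  rw [landauStrips, norm_landauStrip, mul_sub, mul_div_cancel₀ _ (sqrt_pos.2 hΩ).ne']
  congr 1
  ring

lemma landauStrips_eventuallyEq (hΩ : 0 < Ω) (p : ℝ) (x : Pt) :
    landauStrips Ω p =ᶠ[𝓝 x] landauStrip Ω ((round (√Ω * x 0 - p) + p) / √Ω) := by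
  set k := round (√Ω * x 0 - p)
  have close : ∀ᶠ y : Pt in 𝓝 x, |(√Ω * y 0 - p) - (√Ω * x 0 - p)| < 1 / 8 :=
    ContinuousAt.eventually_lt (by fun_prop) continuousAt_const (by simp)
  filter_upwards [close] with y near
  rcases eq_or_ne (round (√Ω * y 0 - p)) k with same | jump
  · rw [landauStrips, same]
  · have apart : (1 : ℝ) ≤ |(round (√Ω * y 0 - p) : ℝ) - k| := by
      exact_mod_cast Int.one_le_abs (sub_ne_zero.2 jump)
    have x_near := abs_sub_round (√Ω * x 0 - p)
    have y_near := abs_sub_round (√Ω * y 0 - p)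
    have own_far : 3 / 8 ≤ |√Ω * y 0 - p - round (√Ω * y 0 - p)| := by
      have := abs_sub_le (round (√Ω * y 0 - p) : ℝ) (√Ω * y 0 - p) k
      have := abs_sub_le (√Ω * y 0 - p) (√Ω * x 0 - p) k
      rw [abs_sub_comm]
      linarith
    have frozen_far : 3 / 8 ≤ |√Ω * (y 0 - (k + p) / √Ω)| := by
      have := abs_sub_le (round (√Ω * y 0 - p) : ℝ) (√Ω * y 0 - p) k
      rw [abs_sub_comm] at y_near
      rw [mul_sub, mul_div_cancel₀ _ (sqrt_pos.2 hΩ).ne', add_comm (k : ℝ), ← sub_sub]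
      linarith
    rw [norm_eq_zero.1 ((norm_landauStrips hΩ p y).trans (stripProfile_eq_zero own_far)),
      norm_eq_zero.1 ((norm_landauStrip Ω _ y).trans (stripProfile_eq_zero frozen_far))]

lemma contDiff_landauStrips (hΩ : 0 < Ω) (p : ℝ) : ContDiff ℝ 1 (landauStrips Ω p) :=
  contDiff_iff_contDiffAt.2 fun x =>
    (contDiff_landauStrip Ω _).contDiffAt.congr_of_eventuallyEq (landauStrips_eventuallyEq hΩ p x)

lemma kin_landauStrips_le (hΩ : 0 < Ω) (p : ℝ) (x : Pt) : kin Ω (landauStrips Ω p) x ≤ 257 * Ω :=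
  (kin_congr (landauStrips_eventuallyEq hΩ p x) Ω).trans_le (kin_landauStrip_le hΩ.le _ x)

lemma norm_landauStrips_le_one (hΩ : 0 < Ω) (p : ℝ) (x : Pt) : ‖landauStrips Ω p x‖ ≤ 1 :=
  (norm_landauStrips hΩ p x).trans_le (stripProfile_le_one _)

lemma abs_sub_round_le_or_abs_sub_half_sub_round_le (s : ℝ) :
    |s - round s| ≤ 1 / 4 ∨ |s - 1 / 2 - round (s - 1 / 2)| ≤ 1 / 4 := by
  refine or_iff_not_imp_left.2 fun far => ?_
  have near := abs_le.1 (abs_sub_round s)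
  rcases lt_abs.1 (not_le.1 far) with right | left
  · refine (round_le _ (round s)).trans (abs_le.2 ⟨?_, ?_⟩) <;> linarith
  · refine (round_le _ (round s - 1)).trans (abs_le.2 ⟨?_, ?_⟩) <;> push_cast <;> linarith

lemma one_fourth_le_max_norm_landauStrips (hΩ : 0 < Ω) (x : Pt) :
    1 / 4 ≤ max ‖landauStrips Ω 0 x‖ ‖landauStrips Ω (1 / 2) x‖ := by
  rw [norm_landauStrips hΩ, norm_landauStrips hΩ, sub_zero]
  rcases abs_sub_round_le_or_abs_sub_half_sub_round_le (√Ω * x 0) with integer | half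
  · exact le_max_of_le_left (one_fourth_le_stripProfile integer)
  · exact le_max_of_le_right (one_fourth_le_stripProfile half)

-- The random coefficient `ζ` keeps the zeros of the combined field in general position.
lemma exists_vortexField (hΩ : 0 < Ω) {ε : ℝ} (hε : 0 < ε) :
    ∃ v : Pt → ℂ, ContDiff ℝ 1 v ∧ (∀ x, kin Ω v x ≤ 1028 * Ω) ∧
      ∫ x in B1, (density v x + ε)⁻¹ ≤ 64 * π * (1 + log ((81 + ε) / ε)) := by
  have integer := contDiff_landauStrips hΩ 0
  have half := contDiff_landauStrips hΩ (1 / 2)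
  obtain ⟨ζ, ζ_le, averaged⟩ := exists_integral_inv_norm_add_mul_sq_le (μ := volume.restrict B1) hε
    integer.continuous.measurable half.continuous.measurable (norm_landauStrips_le_one hΩ 0)
    (one_fourth_le_max_norm_landauStrips hΩ)
  refine ⟨fun x => landauStrips Ω 0 x + landauStrips Ω (1 / 2) x * ζ,
    integer.add (half.mul contDiff_const), fun x => ?_, ?_⟩
  · have := kin_add_mul_const_le Ω (integer.differentiable one_ne_zero x)
      (half.differentiable one_ne_zero x) ζ_le
    linarith [kin_landauStrips_le hΩ 0 x, kin_landauStrips_le hΩ (1 / 2) x]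
  · simpa [density, Measure.real, volume_B1, pi_pos.le] using averaged

end Strips

section Asymptotics

variable {Ω₀ : ℝ}

lemma exists_excess_le (h : 4 / √π < Ω₀) : ∃ K, ∀ ε, 0 < ε → ε ≤ 1 → ∃ ψ, FiniteEnergy ψ ∧
    excess ε Ω₀ ψ ≤ K * (ε * (1 + log ((81 + ε) / ε))) := by
  refine ⟨π * (Ω₀ ^ 4 / 32 + 2 + Ω₀ ^ 2 / 4) +
    (8 * (Ω₀ ^ 2 / 8 + 1) * (1028 * Ω₀) + 2 * (Ω₀ ^ 2 / 8 + 1) ^ 2) * (64 * π),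
    fun ε hε hε1 => ?_⟩
  have Ω₀_pos := pos_of_four_div_sqrt_pi_lt h
  have log_nonneg : 0 ≤ log ((81 + ε) / ε) := log_nonneg ((one_le_div hε).2 (by linarith))
  obtain ⟨v, v_smooth, kin_le, σ_le⟩ := exists_vortexField (div_pos Ω₀_pos hε) hε
  refine ⟨trial ε Ω₀ v, FiniteEnergy.of_contDiff (contDiff_trial hε Ω₀ v_smooth), ?_⟩
  refine (excess_trial_le h hε hε1 v_smooth fun x _ =>
    (kin_le x).trans_eq (mul_div_assoc _ _ _).symm).trans ?_
  calc _ ≤ π * ((Ω₀ ^ 4 / 32 + 2 + Ω₀ ^ 2 / 4) * ε) * (1 + log ((81 + ε) / ε)) +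
        (8 * (Ω₀ ^ 2 / 8 + 1) * (1028 * Ω₀) + 2 * (Ω₀ ^ 2 / 8 + 1) ^ 2) * ε *
          (64 * π * (1 + log ((81 + ε) / ε))) := by
        refine add_le_add (le_mul_of_one_le_right (by positivity) (by linarith)) ?_
        exact mul_le_mul_of_nonneg_left σ_le (by positivity)
    _ = _ := by ring

lemma tendsto_mul_one_add_log :
    Tendsto (fun e : ℝ => e * (1 + log ((81 + e ^ 3) / e ^ 3))) (𝓝[>] 0) (𝓝 0) := by
  have expanded : Continuous fun e : ℝ => e * (1 + log (81 + |e| ^ 3)) - 3 * (e * log e) :=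
    (continuous_id.mul (continuous_const.add (Continuous.log (by fun_prop)
      fun e => by positivity))).sub (continuous_const.mul continuous_mul_log)
  have limit := (expanded.tendsto 0).mono_left (nhdsWithin_le_nhds (s := Set.Ioi 0))
  simp only [zero_mul, mul_zero, sub_zero] at limit
  refine limit.congr' (eventually_nhdsWithin_of_forall fun e he => ?_)
  have e_pos : 0 < e := he
  beta_reduce
  rw [abs_of_pos e_pos, log_div (by positivity) (by positivity), log_pow]
  push_cast
  ring

lemma eventually_excess_le (h : 4 / √π < Ω₀) {κ : ℝ} (hκ : 0 < κ) : ∀ᶠ e in 𝓝[>] 0, ∀ Ψ,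
    IsGPMinimizer (e ^ 3) (Ω₀ / e ^ 3) Ψ → excess (e ^ 3) Ω₀ Ψ ≤ κ * e ^ 2 := by
  obtain ⟨K, trial_le⟩ := exists_excess_le h
  set M := 8 * (1 + π * ∫ x in B1, (tfPotential Ω₀ x)⁺ ^ 2)
  have M_pos : 0 < M := by
    have : 0 ≤ ∫ x in B1, (tfPotential Ω₀ x)⁺ ^ 2 := integral_nonneg fun _ => sq_nonneg _
    positivity
  have limit := tendsto_mul_one_add_log.const_mul K
  rw [mul_zero] at limit
  filter_upwards [limit.eventually_le_const (show 0 < min (1 / (4 * π)) (κ / M) by positivity),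
    Ioo_mem_nhdsGT one_pos] with e small ⟨e_pos, e_lt⟩ Ψ hΨ
  obtain ⟨ψ, hψ, ψ_le⟩ := trial_le (e ^ 3) (pow_pos e_pos 3) (pow_le_one₀ e_pos.le e_lt.le)
  replace ψ_le : excess (e ^ 3) Ω₀ ψ ≤ min (1 / (4 * π)) (κ / M) * e ^ 2 := by
    nlinarith [sq_nonneg e]
  have ψ_small : π * excess (e ^ 3) Ω₀ ψ ≤ 1 / 4 := by
    calc _ ≤ π * (1 / (4 * π) * 1) := by
          gcongr
          exact ψ_le.trans (mul_le_mul (min_le_left _ _) (pow_le_one₀ e_pos.le e_lt.le)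
            (sq_nonneg e) (by positivity))
      _ = 1 / 4 := by
          field_simp
  calc _ ≤ M * excess (e ^ 3) Ω₀ ψ := excess_le_mul_excess_of_isGPMinimizer hΨ (pow_pos e_pos 3)
        (setIntegral_tfPotential_posPart h) hψ ψ_small
    _ ≤ M * (κ / M * e ^ 2) := by
        gcongr
        exact ψ_le.trans (mul_le_mul_of_nonneg_right (min_le_right _ _) (sq_nonneg e))
    _ = κ * e ^ 2 := by
        field_simp

lemma eventually_chemicalPotential_le (h : 4 / √π < Ω₀) {κ : ℝ} (hκ : 0 < κ) :
    ∀ᶠ e in 𝓝[>] 0, ∀ Ψ, IsGPMinimizer (e ^ 3) (Ω₀ / e ^ 3) Ψ →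
      chemicalPotential (e ^ 3) Ω₀ Ψ ≤ κ * e := by
  set T := ∫ x in B1, (tfPotential Ω₀ x)⁺ ^ 2
  have T_nonneg : 0 ≤ T := integral_nonneg fun _ => sq_nonneg _
  set δ := κ / (2 * (T + 1)) with δ_def
  have δ_pos : 0 < δ := div_pos hκ (by linarith [T_nonneg])
  filter_upwards [eventually_excess_le h (show 0 < κ / (2 * (2 + δ⁻¹)) by positivity),
    Ioo_mem_nhdsGT one_pos] with e excess_le ⟨e_pos, e_lt⟩ Ψ hΨ
  have first : (2 + (δ * e)⁻¹) * excess (e ^ 3) Ω₀ Ψ ≤ κ / 2 * e := by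
    have coefficient : (2 + (δ * e)⁻¹) * e ≤ 2 + δ⁻¹ := by
      rw [add_mul, mul_inv, mul_assoc, inv_mul_cancel₀ e_pos.ne']
      linarith
    calc _ ≤ (2 + (δ * e)⁻¹) * (κ / (2 * (2 + δ⁻¹)) * e ^ 2) := by
          gcongr
          exact excess_le Ψ hΨ
      _ = (2 + (δ * e)⁻¹) * e * (κ / (2 * (2 + δ⁻¹)) * e) := by ring
      _ ≤ (2 + δ⁻¹) * (κ / (2 * (2 + δ⁻¹)) * e) := by gcongr
      _ = κ / 2 * e := by
          field_simp
  have second : δ * e * T ≤ κ / 2 * e := by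
    have : δ * T ≤ κ / 2 := by
      rw [δ_def, div_mul_eq_mul_div, div_le_div_iff₀ (by positivity) two_pos]
      nlinarith
    nlinarith
  calc _ ≤ (2 + (δ * e)⁻¹) * excess (e ^ 3) Ω₀ Ψ + δ * e * T :=
        (finiteEnergy_of_isGPMinimizer hΨ).chemicalPotential_le (e ^ 3) Ω₀ (mul_pos δ_pos e_pos)
    _ ≤ κ * e := by linarith

theorem exists_eventually_density_le (h : 4 / √π < Ω₀) : ∃ C C', 0 < C ∧ 0 < C' ∧
    ∀ᶠ e in 𝓝[>] 0, ∀ Ψ, IsGPMinimizer (e ^ 3) (Ω₀ / e ^ 3) Ψ → ∀ x, ‖x‖ ≤ R0 Ω₀ - e →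
      density Ψ x ≤ C * e * exp (-(C' * (R0 Ω₀ - e - ‖x‖) ^ 2 / e ^ 2)) := by
  have Ω₀_pos := pos_of_four_div_sqrt_pi_lt h
  have R0_pos := R0_pos h
  have capMass_pos := capMass_pos (Fin 2)
  refine ⟨131072 * exp 2 / (capMass (Fin 2) * R0 Ω₀ ^ 3 * Ω₀ ^ 2),
    2 * √(Ω₀ ^ 2 * R0 Ω₀ / 512) * R0 Ω₀, by positivity, by positivity, ?_⟩
  filter_upwards [eventually_chemicalPotential_le h (show 0 < Ω₀ ^ 2 * R0 Ω₀ / 16 by positivity),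
    self_mem_nhdsWithin] with e potential_le e_pos Ψ hΨ x hx
  exact density_le_of_chemicalPotential_le h e_pos hΨ
    ((potential_le Ψ hΨ).trans_eq (by ring)) hx

lemma rpow_one_third_le {ε : ℝ} (hε : 0 < ε) (hε1 : ε ≤ exp (-1)) :
    ε ^ ((1 : ℝ) / 3) ≤ ε ^ ((1 : ℝ) / 6) * √|log ε| := by
  have log_le : log ε ≤ -1 := (log_le_iff_le_exp hε).2 hε1
  have one_le : 1 ≤ √|log ε| := one_le_sqrt.2 (by rw [abs_of_neg] <;> linarith)
  have exponents : ε ^ ((1 : ℝ) / 3) ≤ ε ^ ((1 : ℝ) / 6) := rpow_le_rpow_of_exponent_ge hε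
    (hε1.trans (exp_le_one_iff.2 (by norm_num))) (by norm_num)
  exact exponents.trans (le_mul_of_one_le_right (by positivity) one_le)

end Asymptotics

end GrossPitaevskii

theorem stmt11 (Ω₀ : ℝ) (h : 4 / Real.sqrt π < Ω₀) :
    ∃ (C C' ε₀ : ℝ), 0 < C ∧ 0 < C' ∧ 0 < ε₀ ∧ ∀ ε : ℝ, 0 < ε → ε < ε₀ →
      ∀ Ψ : Pt → ℂ, IsGPMinimizer ε (Ω₀ / ε) Ψ →
        ∀ x : Pt, ‖x‖ ≤ R0 Ω₀ - ε ^ ((1:ℝ)/3) →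
          ‖Ψ x‖ ^ 2 ≤ C * ε ^ ((1:ℝ)/6) * Real.sqrt |Real.log ε| *
            Real.exp (-(C' * ((R0 Ω₀ - ε ^ ((1:ℝ)/3)) - ‖x‖) ^ 2 / ε ^ ((2:ℝ)/3))) := by
  obtain ⟨C, C', C_pos, C'_pos, decay⟩ := GrossPitaevskii.exists_eventually_density_le h
  obtain ⟨e₀, e₀_pos, decay⟩ := mem_nhdsGT_iff_exists_Ioo_subset.1 decay
  have e₀_pos : 0 < e₀ := e₀_pos
  refine ⟨C, C', min (exp (-1)) (e₀ ^ 3), C_pos, C'_pos, by positivity,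
    fun ε hε small Ψ hΨ x hx => ?_⟩
  obtain ⟨ε_lt, cube_lt⟩ := lt_min_iff.1 small
  set e := ε ^ ((1 : ℝ) / 3) with e_def
  have cube : e ^ 3 = ε := by
    rw [e_def, ← rpow_mul_natCast hε.le]
    norm_num
  have square : ε ^ ((2 : ℝ) / 3) = e ^ 2 := by
    rw [e_def, ← rpow_mul_natCast hε.le]
    norm_num
  have e_lt : e < e₀ := lt_of_pow_lt_pow_left₀ 3 e₀_pos.le (cube ▸ cube_lt)
  rw [square, mul_assoc C]
  refine (decay ⟨rpow_pos_of_pos hε _, e_lt⟩ Ψ (cube.symm ▸ hΨ) x hx).trans ?_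
  gcongr
  exact GrossPitaevskii.rpow_one_third_le hε ε_lt.le
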